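/- arXiv:1301.6469 — 8 statements merged into one kernel-verified Lean document; each statement's English description precedes it below -/
import Mathlib

section
/- Let w : ℝ → ℝ be positive and differentiable, and let x₁,…,xₙ be distinct real numbers. Fix k and suppose that the function x ↦ w(x)·∏_{l≠k}(x − x_l)² attains a local maximum at x = x_k. Then the Fejér constant at x_k vanishes: C_{k,w} = 2·∑_{l≠k} 1/(x_k − x_l) + w'(x_k)/w(x_k) = 0. -/
open Real Filter Set Finset

/-!
Logarithmic differentiation: a critical point of a function that does not vanish there is a zero
of its logarithmic derivative, and the logarithmic derivative of the weighted product at `x_k` is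
exactly the Fejér constant `C_{k,w}`.
-/

section LogDeriv

variable {𝕜 ι : Type*} [NontriviallyNormedField 𝕜] {s : Finset ι} {x : ι → 𝕜} {a : 𝕜}

theorem logDeriv_sub_const_pow (a c : 𝕜) (m : ℕ) :
    logDeriv (fun t => (t - c) ^ m) a = m / (a - c) := by
  rw [logDeriv_fun_pow (by fun_prop), logDeriv_apply, deriv_sub_const_fun, deriv_id'', mul_one_div]

theorem logDeriv_prod_sub_pow (m : ι → ℕ) (ha : ∀ l ∈ s, a ≠ x l) :
    logDeriv (fun t => ∏ l ∈ s, (t - x l) ^ m l) a = ∑ l ∈ s, m l / (a - x l) := by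
  rw [logDeriv_prod (f := fun l t => (t - x l) ^ m l)
    (fun l hl => pow_ne_zero _ (sub_ne_zero.mpr (ha l hl))) (fun l _ => by fun_prop)]
  simp only [logDeriv_sub_const_pow]

theorem logDeriv_mul_prod_sub_pow (m : ι → ℕ) (ha : ∀ l ∈ s, a ≠ x l) {w : 𝕜 → 𝕜}
    (hw : w a ≠ 0) (hw_diff : DifferentiableAt 𝕜 w a) :
    logDeriv (fun t => w t * ∏ l ∈ s, (t - x l) ^ m l) a =
      ∑ l ∈ s, m l / (a - x l) + logDeriv w a := by
  have hprod : ∏ l ∈ s, (a - x l) ^ m l ≠ 0 :=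
    prod_ne_zero_iff.mpr fun l hl => pow_ne_zero _ (sub_ne_zero.mpr (ha l hl))
  rw [logDeriv_mul a hw hprod hw_diff (by fun_prop), logDeriv_prod_sub_pow m ha, add_comm]

theorem fejer_constant_vanishes_of_isLocalMax_general (m : ι → ℕ) (ha : ∀ l ∈ s, a ≠ x l)
    {w : 𝕜 → 𝕜} (hw : w a ≠ 0) (hw_diff : DifferentiableAt 𝕜 w a)
    (hcrit : deriv (fun t => w t * ∏ l ∈ s, (t - x l) ^ m l) a = 0) :
    ∑ l ∈ s, m l / (a - x l) + deriv w a / w a = 0 := by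
  rw [← logDeriv_apply, ← logDeriv_mul_prod_sub_pow m ha hw hw_diff, logDeriv_apply, hcrit,
    zero_div]

end LogDeriv

/-- If the weighted fundamental function
`x ↦ w(x)·∏_{l≠k}(x - x_l)²` has a local maximum at `x_k`, then the Fejér constant at `x_k`
vanishes: `2·∑_{l≠k} 1/(x_k - x_l) + w'(x_k)/w(x_k) = 0`. -/
theorem fejer_constant_vanishes_of_isLocalMax
    (w : ℝ → ℝ) (hw_pos : ∀ x, 0 < w x) (hw_diff : Differentiable ℝ w)
    (n : ℕ) (x : Fin n → ℝ) (hinj : Function.Injective x) (k : Fin n)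
    (hmax : IsLocalMax (fun t => w t * ∏ l ∈ Finset.univ.erase k, (t - x l) ^ 2) (x k)) :
    2 * ∑ l ∈ Finset.univ.erase k, 1 / (x k - x l) + deriv w (x k) / w (x k) = 0 := by
  simpa only [mul_sum, mul_one_div, Nat.cast_ofNat] using
    fejer_constant_vanishes_of_isLocalMax_general (fun _ => 2)
      (fun l hl => hinj.ne (ne_of_mem_erase hl).symm) (hw_pos _).ne' (hw_diff _) hmax.deriv_eq_zero
end

section
/- Let w : ℝ → ℝ be positive and differentiable and let x₁,…,xₙ be distinct real numbers with fundamental Lagrange polynomials l_k(x) = ∏_{l≠k}(x − x_l)/(x_k − x_l). Suppose the system of nodes satisfies the 1(w)-normality inequality: w(x)·∑_{k=1}^n l_k(x)²/w(x_k) ≤ 1 for every x ∈ ℝ. Then every Fejér constant vanishes: C_{k,w} = 2·∑_{l≠k} 1/(x_k − x_l) + w'(x_k)/w(x_k) = 0 for k = 1,…,n. -/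
open Real Filter Set Finset

/-!
The Fejér constant at `x k` is the logarithmic derivative at `x k` of `w * l_k ^ 2`, where `l_k` is
the fundamental polynomial of the node `x k`. Up to the factor `w (x k)`, this function is one of
the nonnegative summands of the Grünwald kernel. Normality therefore gives
`w t * l_k(t) ^ 2 ≤ w (x k)`, with equality at `t = x k`, so that `x k` is a critical point.
-/

open Topology

variable {ι : Type*} [DecidableEq ι]

/-- The Fejér constant `C_{k,w} = 2 * ∑_{j ≠ k} 1 / (x k - x j) + w'(x k) / w (x k)` of the system
of nodes `x i`, `i ∈ s`. The doubled sum stands for the quotient `ω''(x k) / ω'(x k)` of the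
literature, where `ω` is the nodal polynomial; the two agree when the nodes are distinct. -/
noncomputable def fejerConstant {𝕜 : Type*} [NontriviallyNormedField 𝕜] (w : 𝕜 → 𝕜)
    (s : Finset ι) (x : ι → 𝕜) (k : ι) : 𝕜 :=
  2 * ∑ j ∈ s.erase k, 1 / (x k - x j) + deriv w (x k) / w (x k)

/-- The Grünwald kernel `w * ∑ k, l_k ^ 2 / w (x k)` of the system of nodes `x i`, `i ∈ s`, whose
bound by `1` is the normality inequality. -/
noncomputable def grunwaldKernel {F : Type*} [Field F] (w : F → F) (s : Finset ι) (x : ι → F)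
    (t : F) : F :=
  w t * ∑ k ∈ s, (Lagrange.basis s x k).eval t ^ 2 / w (x k)

theorem eval_lagrangeBasis {F : Type*} [Field F] (s : Finset ι) (x : ι → F) (k : ι) (t : F) :
    (Lagrange.basis s x k).eval t = ∏ j ∈ s.erase k, (t - x j) / (x k - x j) := by
  simp [Lagrange.basis, Lagrange.basisDivisor, Polynomial.eval_prod, div_eq_inv_mul]

section LogDeriv

variable {𝕜 : Type*} [NontriviallyNormedField 𝕜] {s : Finset ι} {x : ι → 𝕜} {k : ι}

theorem logDeriv_eval_lagrangeBasis (hx : Set.InjOn x s) (hk : k ∈ s) {t : 𝕜}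
    (ht : ∀ j ∈ s.erase k, t ≠ x j) :
    logDeriv (fun u ↦ (Lagrange.basis s x k).eval u) t = ∑ j ∈ s.erase k, 1 / (t - x j) := by
  have node_sub_ne_zero : ∀ j ∈ s.erase k, x k - x j ≠ 0 := fun j hj ↦
    sub_ne_zero.2 <| hx.ne hk (mem_of_mem_erase hj) (ne_of_mem_erase hj).symm
  have sub_node_ne_zero : ∀ j ∈ s.erase k, t - x j ≠ 0 := fun j hj ↦ sub_ne_zero.2 (ht j hj)
  simp only [eval_lagrangeBasis]
  rw [logDeriv_prod (f := fun j u ↦ (u - x j) / (x k - x j))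
    (fun j hj ↦ div_ne_zero (sub_node_ne_zero j hj) (node_sub_ne_zero j hj))
    (fun j _ ↦ by fun_prop)]
  refine sum_congr rfl fun j hj ↦ ?_
  simp only [div_eq_mul_inv]
  rw [logDeriv_mul_const _ _ (inv_ne_zero (node_sub_ne_zero j hj))]
  simp [logDeriv_apply]

theorem logDeriv_mul_sq_lagrangeBasis_node {w : 𝕜 → 𝕜} (hx : Set.InjOn x s) (hk : k ∈ s)
    (hw : DifferentiableAt 𝕜 w (x k)) (hw₀ : w (x k) ≠ 0) :
    logDeriv (fun t ↦ w t * (Lagrange.basis s x k).eval t ^ 2) (x k) = fejerConstant w s x k := by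
  have basis_sq_node_ne_zero : (Lagrange.basis s x k).eval (x k) ^ 2 ≠ 0 := by
    simp [Lagrange.eval_basis_self hx hk]
  have node_ne : ∀ j ∈ s.erase k, x k ≠ x j := fun j hj ↦
    hx.ne hk (mem_of_mem_erase hj) (ne_of_mem_erase hj).symm
  rw [logDeriv_mul _ hw₀ basis_sq_node_ne_zero hw (by fun_prop), logDeriv_fun_pow (by fun_prop),
    logDeriv_eval_lagrangeBasis hx hk node_ne, logDeriv_apply, fejerConstant, add_comm,
    Nat.cast_ofNat]

end LogDeriv

theorem mul_sq_lagrangeBasis_div_le_grunwaldKernel {F : Type*} [Field F] [LinearOrder F]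
    [IsStrictOrderedRing F] {w : F → F} {s : Finset ι} {x : ι → F} {k : ι} {t : F} (hk : k ∈ s)
    (hw : ∀ i ∈ s, 0 ≤ w (x i)) (ht : 0 ≤ w t) :
    w t * (Lagrange.basis s x k).eval t ^ 2 / w (x k) ≤ grunwaldKernel w s x t := by
  rw [grunwaldKernel, mul_div_assoc]
  gcongr
  exact single_le_sum (f := fun i ↦ (Lagrange.basis s x i).eval t ^ 2 / w (x i))
    (fun i hi ↦ div_nonneg (sq_nonneg _) (hw i hi)) hk

section Real

variable {w : ℝ → ℝ} {s : Finset ι} {x : ι → ℝ} {k : ι}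

theorem isLocalMax_mul_sq_lagrangeBasis (hx : Set.InjOn x s) (hk : k ∈ s)
    (hw_pos : ∀ i ∈ s, 0 < w (x i)) (hw_cont : ContinuousAt w (x k))
    (hnormal : ∀ᶠ t in 𝓝 (x k), grunwaldKernel w s x t ≤ 1) :
    IsLocalMax (fun t ↦ w t * (Lagrange.basis s x k).eval t ^ 2) (x k) := by
  filter_upwards [hnormal, hw_cont.eventually_const_lt (hw_pos k hk)] with t hle hwt
  calc
    w t * (Lagrange.basis s x k).eval t ^ 2 ≤ w (x k) := by
      rw [← div_le_one (hw_pos k hk)]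
      exact (mul_sq_lagrangeBasis_div_le_grunwaldKernel hk (fun i hi ↦ (hw_pos i hi).le)
        hwt.le).trans hle
    _ = w (x k) * (Lagrange.basis s x k).eval (x k) ^ 2 := by
      rw [Lagrange.eval_basis_self hx hk, one_pow, mul_one]

theorem fejer_constants_vanish_of_one_w_normal_general (hx : Set.InjOn x s) (hk : k ∈ s)
    (hw_pos : ∀ i ∈ s, 0 < w (x i)) (hw_diff : DifferentiableAt ℝ w (x k))
    (hnormal : ∀ᶠ t in 𝓝 (x k), grunwaldKernel w s x t ≤ 1) :
    fejerConstant w s x k = 0 := by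
  rw [← logDeriv_mul_sq_lagrangeBasis_node hx hk hw_diff (hw_pos k hk).ne', logDeriv_apply,
    (isLocalMax_mul_sq_lagrangeBasis hx hk hw_pos hw_diff.continuousAt hnormal).deriv_eq_zero,
    zero_div]

end Real

/-- If a system of distinct nodes satisfies the `1(w)`-normality inequality
`w(x)·∑ₖ lₖ(x)²/w(xₖ) ≤ 1` for all real `x`, where `lₖ` are the fundamental Lagrange
polynomials, then every Fejér constant vanishes:
`2·∑_{l≠k} 1/(x_k - x_l) + w'(x_k)/w(x_k) = 0` for all `k`. -/
theorem fejer_constants_vanish_of_one_w_normal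
    (w : ℝ → ℝ) (hw_pos : ∀ x, 0 < w x) (hw_diff : Differentiable ℝ w)
    (n : ℕ) (x : Fin n → ℝ) (hinj : Function.Injective x)
    (l : Fin n → ℝ → ℝ)
    (hl : ∀ k t, l k t = ∏ j ∈ Finset.univ.erase k, (t - x j) / (x k - x j))
    (hnormal : ∀ t : ℝ, w t * ∑ k, (l k t) ^ 2 / w (x k) ≤ 1) :
    ∀ k : Fin n,
      2 * ∑ j ∈ Finset.univ.erase k, 1 / (x k - x j) + deriv w (x k) / w (x k) = 0 := by
  intro k
  exact fejer_constants_vanish_of_one_w_normal_general hinj.injOn (mem_univ k)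
    (fun i _ ↦ hw_pos (x i)) (hw_diff (x k))
    (.of_forall fun t ↦ by simpa only [grunwaldKernel, eval_lagrangeBasis, ← hl] using hnormal t)
end

section
/- Let (a,b) be a real interval, w : (a,b) → ℝ positive, n ≥ 2, and let x₁ < … < xₙ be points of (a,b). Let \hat{l}₁,…,\hat{l}ₙ be nonzero real polynomials with \hat{l}_k(x_i) = δ_{ki} for all i,k, and suppose the interpolatory system is w-stable on (a,b): for every y₁,…,yₙ ≥ 0 and every x ∈ (a,b), 0 ≤ w(x)·∑_{k=1}^n \hat{l}_k(x)·y_k/w(x_k) ≤ max_k y_k. Then deg \hat{l}_k ≥ 2(n−1) for every k, and consequently ∑_{k=1}^n deg \hat{l}_k ≥ 2n(n−1). -/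
open Real Filter Set Finset

/-!
Testing stability on data supported at a single node shows that every `l̂ₖ` is nonnegative on
`(a,b)`. The other `n - 1` nodes are zeros of `l̂ₖ` interior to `(a,b)`, hence local minima, hence
zeros of multiplicity at least two; counting zeros with multiplicity bounds the degree.
-/

open Polynomial Topology

theorem mul_card_le_natDegree_of_forall_pow_X_sub_C_dvd {R : Type*} [CommRing R] [IsDomain R]
    {p : R[X]} (hp : p ≠ 0) {s : Finset R} {m : ℕ} (h : ∀ c ∈ s, (X - C c) ^ m ∣ p) :
    m * #s ≤ p.natDegree := by
  classical
  have hroots : m • s.val ≤ p.roots := by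
    refine Multiset.le_iff_count.2 fun c ↦ ?_
    rw [Multiset.count_nsmul, count_roots]
    by_cases hc : c ∈ s
    · rw [Multiset.count_eq_one_of_mem s.nodup hc, mul_one]
      exact (le_rootMultiplicity_iff hp).2 (h c hc)
    · rw [Multiset.count_eq_zero_of_notMem hc, mul_zero]
      exact Nat.zero_le _
  calc m * #s = (m • s.val).card := (Multiset.card_nsmul _ _).symm
    _ ≤ p.roots.card := Multiset.card_le_card hroots
    _ ≤ p.natDegree := p.card_roots'

theorem sq_X_sub_C_dvd_of_isLocalExtr {p : ℝ[X]} {c : ℝ} (hroot : p.IsRoot c)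
    (hextr : IsLocalExtr (fun t ↦ p.eval t) c) : (X - C c) ^ 2 ∣ p := by
  rcases eq_or_ne p 0 with rfl | hp
  · exact dvd_zero _
  · have hderiv : p.derivative.IsRoot c := p.deriv.symm.trans hextr.deriv_eq_zero
    exact (le_rootMultiplicity_iff hp).1
      ((one_lt_rootMultiplicity_iff_isRoot hp).2 ⟨hroot, hderiv⟩)

/-- The polynomials `L k`, of arbitrary degree, form an interpolatory system on the nodes `x`:
`L k (x i) = δₖᵢ`. -/
def IsInterpolatorySystem {ι R : Type*} [DecidableEq ι] [Semiring R] (x : ι → R)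
    (L : ι → R[X]) : Prop :=
  ∀ k i, (L k).eval (x i) = if k = i then 1 else 0

namespace IsInterpolatorySystem

section Semiring

variable {ι R : Type*} [DecidableEq ι] [Semiring R] {x : ι → R} {L : ι → R[X]}

theorem eval_self (h : IsInterpolatorySystem x L) (k : ι) : (L k).eval (x k) = 1 :=
  (h k k).trans (if_pos rfl)

theorem isRoot (h : IsInterpolatorySystem x L) {k i : ι} (hki : k ≠ i) : (L k).IsRoot (x i) :=
  (h k i).trans (if_neg hki)

variable [Nontrivial R]

theorem ne_zero (h : IsInterpolatorySystem x L) (k : ι) : L k ≠ 0 := fun hk ↦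
  one_ne_zero <| calc
    (1 : R) = (L k).eval (x k) := (h.eval_self k).symm
    _ = 0 := by rw [hk, eval_zero]

theorem injective (h : IsInterpolatorySystem x L) : Function.Injective x := fun k i hx ↦ by
  by_contra hki
  exact one_ne_zero <| calc
    (1 : R) = (L k).eval (x i) := by rw [← hx, h.eval_self]
    _ = 0 := h.isRoot hki

end Semiring

variable {ι : Type*} [Fintype ι] [DecidableEq ι] {x : ι → ℝ} {L : ι → ℝ[X]}

theorem two_mul_card_sub_one_le_natDegree (h : IsInterpolatorySystem x L) {k : ι}
    (hnonneg : ∀ i, k ≠ i → ∀ᶠ t in 𝓝 (x i), 0 ≤ (L k).eval t) :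
    2 * (Fintype.card ι - 1) ≤ (L k).natDegree := by
  have hdvd : ∀ c ∈ (univ.erase k).image x, (X - C c) ^ 2 ∣ L k := by
    refine forall_mem_image.2 fun i hi ↦ ?_
    have hki : k ≠ i := (ne_of_mem_erase hi).symm
    have hmin : IsLocalMin (fun t ↦ (L k).eval t) (x i) :=
      (hnonneg i hki).mono fun _ ht ↦ (h.isRoot hki).le.trans ht
    exact sq_X_sub_C_dvd_of_isLocalExtr (h.isRoot hki) (.inl hmin)
  calc 2 * (Fintype.card ι - 1) = 2 * #((univ.erase k).image x) := by
        rw [card_image_of_injective _ h.injective, card_erase_of_mem (mem_univ k), card_univ]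
    _ ≤ (L k).natDegree := mul_card_le_natDegree_of_forall_pow_X_sub_C_dvd (h.ne_zero k) hdvd

end IsInterpolatorySystem

theorem nonneg_of_forall_nonneg_mul_sum_div {ι 𝕜 : Type*} [Fintype ι] [Field 𝕜] [LinearOrder 𝕜]
    [IsStrictOrderedRing 𝕜] {v : 𝕜} (hv : 0 < v) {f u : ι → 𝕜} {k : ι} (hu : 0 < u k)
    (h : ∀ y : ι → 𝕜, (∀ j, 0 ≤ y j) → 0 ≤ v * ∑ j, f j * y j / u j) : 0 ≤ f k := by
  classical
  have hsum : ∑ j, f j * (Pi.single k (u k) : ι → 𝕜) j / u j = f k := by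
    rw [Fintype.sum_eq_single k fun j hj ↦ by rw [Pi.single_eq_of_ne hj, mul_zero, zero_div],
      Pi.single_eq_same, mul_div_cancel_right₀ _ hu.ne']
  have hdata : (0 : ι → 𝕜) ≤ Pi.single k (u k) := Pi.single_nonneg.2 hu.le
  exact nonneg_of_mul_nonneg_right (hsum ▸ h _ hdata) hv

theorem w_stable_system_degree_lower_bound_general {ι : Type*} [Fintype ι] [DecidableEq ι]
    {x : ι → ℝ} {L : ι → ℝ[X]} (hinterp : IsInterpolatorySystem x L)
    (hnonneg : ∀ k i, k ≠ i → ∀ᶠ t in 𝓝 (x i), 0 ≤ (L k).eval t) :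
    (∀ k, 2 * (Fintype.card ι - 1) ≤ (L k).natDegree) ∧
      2 * Fintype.card ι * (Fintype.card ι - 1) ≤ ∑ k, (L k).natDegree := by
  have hdeg (k : ι) : 2 * (Fintype.card ι - 1) ≤ (L k).natDegree :=
    hinterp.two_mul_card_sub_one_le_natDegree (hnonneg k)
  refine ⟨hdeg, ?_⟩
  calc 2 * Fintype.card ι * (Fintype.card ι - 1)
      = #(univ : Finset ι) • (2 * (Fintype.card ι - 1)) := by rw [card_univ, smul_eq_mul]; ring
    _ ≤ ∑ k, (L k).natDegree := card_nsmul_le_sum _ _ _ fun k _ ↦ hdeg k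

/-- If an interpolatory system of nonzero polynomials `l̂₁,…,l̂ₙ`
(`l̂ₖ(xᵢ) = δₖᵢ`) on nodes `x₁ < … < xₙ` of an interval `(a,b)` is `w`-stable, i.e.
`0 ≤ w(x)·∑ₖ l̂ₖ(x)·yₖ/w(xₖ) ≤ maxₖ yₖ` for all nonnegative `y` and `x ∈ (a,b)`,
then `deg l̂ₖ ≥ 2(n-1)` for every `k`, hence `∑ₖ deg l̂ₖ ≥ 2n(n-1)`. -/
theorem w_stable_system_degree_lower_bound
    (a b : EReal) (S : Set ℝ) (hS : S = {x : ℝ | a < (x : EReal) ∧ (x : EReal) < b})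
    (w : ℝ → ℝ) (hw_pos : ∀ x ∈ S, 0 < w x)
    (n : ℕ) (hn : 2 ≤ n)
    (x : Fin n → ℝ) (hmono : StrictMono x) (hxS : ∀ i, x i ∈ S)
    (L : Fin n → Polynomial ℝ) (hL0 : ∀ k, L k ≠ 0)
    (hinterp : ∀ k i : Fin n, (L k).eval (x i) = if k = i then 1 else 0)
    (hstable : ∀ y : Fin n → ℝ, (∀ k, 0 ≤ y k) → ∀ t ∈ S,
      0 ≤ w t * ∑ k, (L k).eval t * y k / w (x k) ∧
      w t * ∑ k, (L k).eval t * y k / w (x k) ≤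
        Finset.univ.sup' ⟨⟨0, by omega⟩, Finset.mem_univ _⟩ y) :
    (∀ k, 2 * (n - 1) ≤ (L k).natDegree) ∧
      2 * n * (n - 1) ≤ ∑ k, (L k).natDegree := by
  subst hS
  have hnhds (i : Fin n) : {t : ℝ | a < (t : EReal) ∧ (t : EReal) < b} ∈ 𝓝 (x i) :=
    (isOpen_Ioo.preimage continuous_coe_real_ereal).mem_nhds (hxS i)
  have hnonneg (k : Fin n) {t : ℝ} (ht : a < (t : EReal) ∧ (t : EReal) < b) :
      0 ≤ (L k).eval t :=
    nonneg_of_forall_nonneg_mul_sum_div (f := fun j ↦ (L j).eval t) (u := fun j ↦ w (x j))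
      (hw_pos t ht) (hw_pos (x k) (hxS k)) fun y hy ↦ (hstable y hy t ht).1
  simpa only [Fintype.card_fin] using
    w_stable_system_degree_lower_bound_general hinterp fun k i _ ↦
      mem_of_superset (hnhds i) fun _ ↦ hnonneg k
end

section
/- Let α, β > 0 and let w(t) = (1−t)^α·(1+t)^β be the Jacobi weight on (−1,1), with Q(t) = −α·log(1−t) − β·log(1+t), so Q'(t) = α/(1−t) − β/(1+t). Let p_n be the n-th orthonormal polynomial with respect to w on (−1,1). Then for every x ∈ (−1,1): ∫_{−1}^1 p_n(t)²·w(t)·(Q'(t) − Q'(x))/(t − x) dt = (α + β + 1 + 2n)/(1 − x²). -/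
open Real Filter Set MeasureTheory

/-!
Write `w_{a,b}(t) = (1 - t)^a (1 + t)^b`. By partial fractions, the divided difference of `Q'` is
`α / ((1 - x) (1 - t)) + β / ((1 + x) (1 + t))`, so the integral is a combination of the integrals
of `p²` against `w_{α-1,β}` and `w_{α,β-1}`. Integrating the derivative of `f w_{a+1,b+1}` over
`[-1, 1]` and using `w_{a+1,b} + w_{a,b+1} = 2 w_{a,b}` expresses the integral of `f w_{a,b}`
through those of `f w_{a+1,b}` (or `f w_{a,b+1}`) and of the derivative of `f` against
`w_{a+1,b+1}`. For `f = p²` the last term is computed by orthogonality, because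
`(t + c) p'(t) - n p(t)` has degree less than `n` for every `c`. Hence `α ∫ p² w_{α-1,β}` and
`β ∫ p² w_{α,β-1}` have the same value `(α + β + 1 + 2n) / 2`, and
`1 / (1 - x) + 1 / (1 + x) = 2 / (1 - x²)`.
-/

/-- The Jacobi weight `(1 - t) ^ α * (1 + t) ^ β` of the interval `[-1, 1]`, with real exponents;
it is the intended function only there, since `Real.rpow` has a junk value at negative bases. -/
noncomputable def jacobiWeight (α β t : ℝ) : ℝ :=
  (1 - t) ^ α * (1 + t) ^ β

/-- The derivative `Q'` of the external field `Q = -log (jacobiWeight α β)` on `(-1, 1)`, taken as a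
rational function on the whole line. -/
noncomputable def jacobiFieldDeriv (α β t : ℝ) : ℝ :=
  α / (1 - t) - β / (1 + t)

section Weight

variable {α β t : ℝ}

lemma jacobiWeight_neg (α β t : ℝ) : jacobiWeight α β (-t) = jacobiWeight β α t := by
  simp only [jacobiWeight, sub_neg_eq_add, ← sub_eq_add_neg, mul_comm]

lemma jacobiWeight_add_one_left (hα : α + 1 ≠ 0) (ht : t ≤ 1) :
    jacobiWeight (α + 1) β t = (1 - t) * jacobiWeight α β t := by
  rw [jacobiWeight, jacobiWeight, rpow_add_one' (sub_nonneg.2 ht) hα]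
  ring

lemma jacobiWeight_add_one_right (hβ : β + 1 ≠ 0) (ht : -1 ≤ t) :
    jacobiWeight α (β + 1) t = (1 + t) * jacobiWeight α β t := by
  rw [← jacobiWeight_neg, jacobiWeight_add_one_left hβ (neg_le.1 ht), jacobiWeight_neg,
    sub_neg_eq_add]

lemma jacobiWeight_one (hα : α ≠ 0) (β : ℝ) : jacobiWeight α β 1 = 0 := by
  simp [jacobiWeight, zero_rpow hα]

lemma jacobiWeight_neg_one (α : ℝ) (hβ : β ≠ 0) : jacobiWeight α β (-1) = 0 := by
  rw [jacobiWeight_neg, jacobiWeight_one hβ]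

lemma continuous_jacobiWeight (hα : 0 ≤ α) (hβ : 0 ≤ β) : Continuous (jacobiWeight α β) :=
  ((continuous_const.sub continuous_id).rpow_const fun _ => .inr hα).mul
    ((continuous_const.add continuous_id).rpow_const fun _ => .inr hβ)

lemma hasDerivAt_jacobiWeight_add_one (α β : ℝ) (ht : t ∈ Ioo (-1 : ℝ) 1) :
    HasDerivAt (jacobiWeight (α + 1) (β + 1))
      ((β + 1) * jacobiWeight (α + 1) β t - (α + 1) * jacobiWeight α (β + 1) t) t := by
  have h_sub : HasDerivAt (fun s : ℝ => (1 - s) ^ (α + 1))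
      (-1 * (α + 1) * (1 - t) ^ (α + 1 - 1)) t :=
    ((hasDerivAt_id t).const_sub 1).rpow_const (.inl (sub_pos.2 ht.2).ne')
  have h_add : HasDerivAt (fun s : ℝ => (1 + s) ^ (β + 1))
      (1 * (β + 1) * (1 + t) ^ (β + 1 - 1)) t :=
    ((hasDerivAt_id t).const_add 1).rpow_const (.inl (neg_lt_iff_pos_add'.1 ht.1).ne')
  refine (h_sub.mul h_add).congr_deriv ?_
  simp only [jacobiWeight, add_sub_cancel_right]
  ring

lemma intervalIntegrable_jacobiWeight_zero_one (hα : -1 < α) (β : ℝ) :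
    IntervalIntegrable (jacobiWeight α β) volume 0 1 := by
  have h_sub : IntervalIntegrable (fun t : ℝ => (1 - t) ^ α) volume 0 1 := by
    simpa using
      ((intervalIntegral.intervalIntegrable_rpow' (a := 0) (b := 1) hα).comp_sub_left 1).symm
  refine h_sub.mul_continuousOn (ContinuousOn.rpow_const (by fun_prop) fun t ht => .inl ?_)
  rw [uIcc_of_le zero_le_one] at ht
  linarith [ht.1]

lemma intervalIntegrable_jacobiWeight (hα : -1 < α) (hβ : -1 < β) :
    IntervalIntegrable (jacobiWeight α β) volume (-1) 1 := by
  have h_neg : IntervalIntegrable (jacobiWeight α β) volume (-1) 0 := by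
    simpa [jacobiWeight_neg] using
      ((intervalIntegrable_jacobiWeight_zero_one hβ α).comp_sub_left 0).symm
  exact h_neg.trans (intervalIntegrable_jacobiWeight_zero_one hα β)

end Weight

section Integral

variable {α β : ℝ} {f f' : ℝ → ℝ}

lemma integral_mul_jacobiWeight_add_one_left_add_right (hα : -1 < α) (hβ : -1 < β)
    (hf : ContinuousOn f (uIcc (-1) 1)) :
    (∫ t in (-1 : ℝ)..1, f t * jacobiWeight (α + 1) β t) +
        ∫ t in (-1 : ℝ)..1, f t * jacobiWeight α (β + 1) t =
      2 * ∫ t in (-1 : ℝ)..1, f t * jacobiWeight α β t := by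
  rw [← intervalIntegral.integral_add
      ((intervalIntegrable_jacobiWeight (by linarith) hβ).continuousOn_mul hf)
      ((intervalIntegrable_jacobiWeight hα (by linarith)).continuousOn_mul hf),
    ← intervalIntegral.integral_const_mul]
  refine intervalIntegral.integral_congr_Ioo_of_le (by norm_num) fun t ht => ?_
  simp only [jacobiWeight_add_one_left (by linarith : α + 1 ≠ 0) ht.2.le,
    jacobiWeight_add_one_right (by linarith : β + 1 ≠ 0) ht.1.le]
  ring

lemma integral_deriv_mul_jacobiWeight_add_one (hα : -1 < α) (hβ : -1 < β)
    (hf : ContinuousOn f (uIcc (-1) 1)) (hff' : ∀ t ∈ Ioo (-1 : ℝ) 1, HasDerivAt f (f' t) t)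
    (hf' : IntervalIntegrable f' volume (-1) 1) :
    ∫ t in (-1 : ℝ)..1, f' t * jacobiWeight (α + 1) (β + 1) t =
      (α + 1) * (∫ t in (-1 : ℝ)..1, f t * jacobiWeight α (β + 1) t) -
        (β + 1) * ∫ t in (-1 : ℝ)..1, f t * jacobiWeight (α + 1) β t := by
  have hα' : 0 < α + 1 := by linarith
  have hβ' : 0 < β + 1 := by linarith
  have hw_left : IntervalIntegrable (jacobiWeight α (β + 1)) volume (-1) 1 :=
    intervalIntegrable_jacobiWeight hα (by linarith)
  have hw_right : IntervalIntegrable (jacobiWeight (α + 1) β) volume (-1) 1 :=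
    intervalIntegrable_jacobiWeight (by linarith) hβ
  have h_parts := intervalIntegral.integral_mul_deriv_eq_deriv_mul_of_hasDerivAt hf
    (continuous_jacobiWeight hα'.le hβ'.le).continuousOn (by simpa using hff')
    (fun t ht => hasDerivAt_jacobiWeight_add_one α β (by simpa using ht)) hf'
    ((hw_right.const_mul _).sub (hw_left.const_mul _))
  rw [jacobiWeight_one hα'.ne', jacobiWeight_neg_one _ hβ'.ne'] at h_parts
  simp only [mul_sub, mul_left_comm (f _)] at h_parts
  rw [intervalIntegral.integral_sub ((hw_right.continuousOn_mul hf).const_mul _)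
      ((hw_left.continuousOn_mul hf).const_mul _),
    intervalIntegral.integral_const_mul, intervalIntegral.integral_const_mul] at h_parts
  linear_combination h_parts

lemma two_mul_integral_mul_jacobiWeight_eq_left (hα : -1 < α) (hβ : -1 < β)
    (hf : ContinuousOn f (uIcc (-1) 1)) (hff' : ∀ t ∈ Ioo (-1 : ℝ) 1, HasDerivAt f (f' t) t)
    (hf' : IntervalIntegrable f' volume (-1) 1) :
    2 * (α + 1) * ∫ t in (-1 : ℝ)..1, f t * jacobiWeight α β t =
      (α + β + 2) * (∫ t in (-1 : ℝ)..1, f t * jacobiWeight (α + 1) β t) +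
        ∫ t in (-1 : ℝ)..1, f' t * jacobiWeight (α + 1) (β + 1) t := by
  linear_combination -integral_deriv_mul_jacobiWeight_add_one hα hβ hf hff' hf' -
    (α + 1) * integral_mul_jacobiWeight_add_one_left_add_right hα hβ hf

lemma two_mul_integral_mul_jacobiWeight_eq_right (hα : -1 < α) (hβ : -1 < β)
    (hf : ContinuousOn f (uIcc (-1) 1)) (hff' : ∀ t ∈ Ioo (-1 : ℝ) 1, HasDerivAt f (f' t) t)
    (hf' : IntervalIntegrable f' volume (-1) 1) :
    2 * (β + 1) * ∫ t in (-1 : ℝ)..1, f t * jacobiWeight α β t =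
      (α + β + 2) * (∫ t in (-1 : ℝ)..1, f t * jacobiWeight α (β + 1) t) -
        ∫ t in (-1 : ℝ)..1, f' t * jacobiWeight (α + 1) (β + 1) t := by
  linear_combination integral_deriv_mul_jacobiWeight_add_one hα hβ hf hff' hf' -
    (β + 1) * integral_mul_jacobiWeight_add_one_left_add_right hα hβ hf

end Integral

section DividedDifference

variable {α β x t : ℝ}

lemma slope_jacobiFieldDeriv (hx : x ≠ 1) (hx' : x ≠ -1) (ht : t ≠ 1) (ht' : t ≠ -1)
    (hxt : t ≠ x) :
    slope (jacobiFieldDeriv α β) x t = α / (1 - x) / (1 - t) + β / (1 + x) / (1 + t) := by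
  have hx_sub : 1 - x ≠ 0 := sub_ne_zero.2 hx.symm
  have hx_add : 1 + x ≠ 0 := fun h => hx' (by linarith)
  have ht_sub : 1 - t ≠ 0 := sub_ne_zero.2 ht.symm
  have ht_add : 1 + t ≠ 0 := fun h => ht' (by linarith)
  have hxt_sub : t - x ≠ 0 := sub_ne_zero.2 hxt
  rw [slope_def_field, jacobiFieldDeriv, jacobiFieldDeriv]
  field_simp
  ring

lemma jacobiWeight_mul_slope_jacobiFieldDeriv (hx : x ≠ 1) (hx' : x ≠ -1)
    (ht : t ∈ Ioo (-1 : ℝ) 1) (hxt : t ≠ x) :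
    jacobiWeight α β t * slope (jacobiFieldDeriv α β) x t =
      α / (1 - x) * jacobiWeight (α - 1) β t + β / (1 + x) * jacobiWeight α (β - 1) t := by
  have ht_sub : 1 - t ≠ 0 := (sub_pos.2 ht.2).ne'
  have ht_add : 1 + t ≠ 0 := (neg_lt_iff_pos_add'.1 ht.1).ne'
  rw [slope_jacobiFieldDeriv hx hx' ht.2.ne ht.1.ne' hxt, jacobiWeight, jacobiWeight, jacobiWeight,
    rpow_sub_one ht_sub, rpow_sub_one ht_add]
  ring

lemma integral_mul_jacobiWeight_mul_slope {f : ℝ → ℝ} (hα : 0 < α) (hβ : 0 < β)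
    (hf : ContinuousOn f (uIcc (-1) 1)) (hx : x ≠ 1) (hx' : x ≠ -1) :
    ∫ t in (-1 : ℝ)..1, f t * jacobiWeight α β t * slope (jacobiFieldDeriv α β) x t =
      α / (1 - x) * (∫ t in (-1 : ℝ)..1, f t * jacobiWeight (α - 1) β t) +
        β / (1 + x) * ∫ t in (-1 : ℝ)..1, f t * jacobiWeight α (β - 1) t := by
  have hw_left := (intervalIntegrable_jacobiWeight (α := α - 1) (β := β) (by linarith)
    (by linarith)).continuousOn_mul hf
  have hw_right := (intervalIntegrable_jacobiWeight (α := α) (β := β - 1) (by linarith)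
    (by linarith)).continuousOn_mul hf
  rw [← intervalIntegral.integral_const_mul, ← intervalIntegral.integral_const_mul,
    ← intervalIntegral.integral_add (hw_left.const_mul _) (hw_right.const_mul _)]
  refine intervalIntegral.integral_congr_ae ?_
  filter_upwards [volume.ae_ne x, volume.ae_ne 1] with t htx ht1 ht
  rw [uIoc_of_le (by norm_num)] at ht
  rw [mul_assoc, jacobiWeight_mul_slope_jacobiFieldDeriv hx hx' ⟨ht.1, ht.2.lt_of_ne ht1⟩ htx]
  ring

end DividedDifference

section Orthogonality

open Polynomial

lemma degree_X_add_C_mul_derivative_sub_lt {R : Type*} [CommRing R] {P : R[X]} {n : ℕ}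
    (hdeg : P.natDegree ≤ n) (c : R) :
    ((X + C c) * derivative P - C (n : R) * P).degree < (n : WithBot ℕ) := by
  rw [degree_lt_iff_coeff_zero]
  intro m hm
  have h_succ : P.coeff (m + 1) = 0 := coeff_eq_zero_of_natDegree_lt (by omega)
  have h_eq : ((m : R) - n) * P.coeff m = 0 := by
    rcases hm.eq_or_lt with rfl | hlt
    · simp
    · rw [coeff_eq_zero_of_natDegree_lt (hdeg.trans_lt hlt), mul_zero]
  rcases m with _ | k
  · simp_all [add_mul, coeff_derivative]
  · simp only [add_mul, coeff_sub, coeff_add, coeff_X_mul, coeff_C_mul, coeff_derivative, h_succ]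
    push_cast at h_eq
    linear_combination h_eq

lemma integral_mul_X_add_C_mul_derivative {μ : Measure ℝ} {w : ℝ → ℝ}
    (hw : ∀ q : ℝ[X], Integrable (fun t => q.eval t * w t) μ) {n : ℕ} {P : ℝ[X]}
    (hdeg : P.natDegree ≤ n)
    (horth : ∀ q : ℝ[X], q.degree < n → ∫ t, P.eval t * q.eval t * w t ∂μ = 0) (c : ℝ) :
    ∫ t, P.eval t * ((t + c) * P.derivative.eval t) * w t ∂μ =
      n * ∫ t, P.eval t ^ 2 * w t ∂μ := by
  have h_deriv := hw (P * ((X + C c) * derivative P))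
  have h_sq := (hw (P ^ 2)).const_mul (n : ℝ)
  simp only [eval_mul, eval_add, eval_X, eval_C, eval_pow] at h_deriv h_sq
  rw [← sub_eq_zero, ← integral_const_mul, ← integral_sub h_deriv h_sq,
    ← horth _ (degree_X_add_C_mul_derivative_sub_lt hdeg c)]
  congr with t
  simp only [eval_sub, eval_mul, eval_add, eval_X, eval_C]
  ring

variable {α β : ℝ} {n : ℕ} {P : ℝ[X]}

lemma integral_deriv_sq_mul_add_mul_jacobiWeight (hα : -1 < α) (hβ : -1 < β)
    (hdeg : P.natDegree ≤ n)
    (horth : ∀ q : ℝ[X], q.degree < n →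
      ∫ t in (-1 : ℝ)..1, P.eval t * q.eval t * jacobiWeight α β t = 0) (c : ℝ) :
    ∫ t in (-1 : ℝ)..1, (P ^ 2).derivative.eval t * ((t + c) * jacobiWeight α β t) =
      2 * n * ∫ t in (-1 : ℝ)..1, P.eval t ^ 2 * jacobiWeight α β t := by
  have h_le : (-1 : ℝ) ≤ 1 := by norm_num
  simp only [intervalIntegral.integral_of_le h_le] at horth ⊢
  have h_int (q : ℝ[X]) :
      IntegrableOn (fun t => q.eval t * jacobiWeight α β t) (Ioc (-1) 1) volume :=
    (intervalIntegrable_iff_integrableOn_Ioc_of_le h_le).1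
      ((intervalIntegrable_jacobiWeight hα hβ).continuousOn_mul q.continuousOn)
  rw [mul_assoc, ← integral_mul_X_add_C_mul_derivative h_int hdeg horth c, ← integral_const_mul]
  congr with t
  simp only [derivative_sq, eval_mul, eval_C]
  ring

lemma two_mul_integral_sq_mul_jacobiWeight_sub_one_left (hα : 0 < α) (hβ : -1 < β)
    (hdeg : P.natDegree ≤ n)
    (horth : ∀ q : ℝ[X], q.degree < n →
      ∫ t in (-1 : ℝ)..1, P.eval t * q.eval t * jacobiWeight α β t = 0) :
    2 * α * ∫ t in (-1 : ℝ)..1, P.eval t ^ 2 * jacobiWeight (α - 1) β t =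
      (α + β + 1 + 2 * n) * ∫ t in (-1 : ℝ)..1, P.eval t ^ 2 * jacobiWeight α β t := by
  have h_raise := two_mul_integral_mul_jacobiWeight_eq_left (α := α - 1) (by linarith) hβ
    (P ^ 2).continuousOn (fun t _ => (P ^ 2).hasDerivAt t)
    ((P ^ 2).derivative.continuous.intervalIntegrable _ _)
  have h_deriv : ∫ t in (-1 : ℝ)..1, (P ^ 2).derivative.eval t * jacobiWeight α (β + 1) t =
      2 * n * ∫ t in (-1 : ℝ)..1, P.eval t ^ 2 * jacobiWeight α β t := by
    rw [← integral_deriv_sq_mul_add_mul_jacobiWeight (by linarith) hβ hdeg horth 1]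
    refine intervalIntegral.integral_congr_Ioo_of_le (by norm_num) fun t ht => ?_
    simp only [jacobiWeight_add_one_right (by linarith : β + 1 ≠ 0) ht.1.le, add_comm]
  simp only [sub_add_cancel, h_deriv, eval_pow] at h_raise
  linear_combination h_raise

lemma two_mul_integral_sq_mul_jacobiWeight_sub_one_right (hα : -1 < α) (hβ : 0 < β)
    (hdeg : P.natDegree ≤ n)
    (horth : ∀ q : ℝ[X], q.degree < n →
      ∫ t in (-1 : ℝ)..1, P.eval t * q.eval t * jacobiWeight α β t = 0) :
    2 * β * ∫ t in (-1 : ℝ)..1, P.eval t ^ 2 * jacobiWeight α (β - 1) t =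
      (α + β + 1 + 2 * n) * ∫ t in (-1 : ℝ)..1, P.eval t ^ 2 * jacobiWeight α β t := by
  have h_raise := two_mul_integral_mul_jacobiWeight_eq_right (β := β - 1) hα (by linarith)
    (P ^ 2).continuousOn (fun t _ => (P ^ 2).hasDerivAt t)
    ((P ^ 2).derivative.continuous.intervalIntegrable _ _)
  have h_deriv : ∫ t in (-1 : ℝ)..1, (P ^ 2).derivative.eval t * jacobiWeight (α + 1) β t =
      -(2 * n * ∫ t in (-1 : ℝ)..1, P.eval t ^ 2 * jacobiWeight α β t) := by
    rw [← integral_deriv_sq_mul_add_mul_jacobiWeight hα (by linarith) hdeg horth (-1),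
      ← intervalIntegral.integral_neg]
    refine intervalIntegral.integral_congr_Ioo_of_le (by norm_num) fun t ht => ?_
    simp only [jacobiWeight_add_one_left (by linarith : α + 1 ≠ 0) ht.2.le]
    ring
  simp only [sub_add_cancel, h_deriv, eval_pow] at h_raise
  linear_combination h_raise

theorem jacobi_An_eq_general (hα : 0 < α) (hβ : 0 < β) (hdeg : P.natDegree ≤ n)
    (horth : ∀ q : ℝ[X], q.degree < n →
      ∫ t in (-1 : ℝ)..1, P.eval t * q.eval t * jacobiWeight α β t = 0)
    {x : ℝ} (hx : x ≠ 1) (hx' : x ≠ -1) :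
    ∫ t in (-1 : ℝ)..1,
        P.eval t ^ 2 * jacobiWeight α β t * slope (jacobiFieldDeriv α β) x t =
      (α + β + 1 + 2 * n) / (1 - x ^ 2) *
        ∫ t in (-1 : ℝ)..1, P.eval t ^ 2 * jacobiWeight α β t := by
  have h_left := two_mul_integral_sq_mul_jacobiWeight_sub_one_left hα (by linarith) hdeg horth
  have h_right := two_mul_integral_sq_mul_jacobiWeight_sub_one_right (by linarith) hβ hdeg horth
  have hx_sub : 1 - x ≠ 0 := sub_ne_zero.2 hx.symm
  have hx_add : 1 + x ≠ 0 := fun h => hx' (by linarith)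
  rw [integral_mul_jacobiWeight_mul_slope hα hβ (by fun_prop) hx hx',
    show 1 - x ^ 2 = (1 - x) * (1 + x) by ring]
  field_simp
  linear_combination (1 + x) / 2 * h_left + (1 - x) / 2 * h_right

end Orthogonality

/-- For the Jacobi weight `w(t) = (1-t)^α·(1+t)^β` on `(-1,1)` with
`α, β > 0`, `Q'(t) = α/(1-t) - β/(1+t)`, and the `n`-th orthonormal polynomial `p_n`
with respect to `w`, one has for every `x ∈ (-1,1)`:
`∫_{-1}^1 p_n(t)²·w(t)·(Q'(t)-Q'(x))/(t-x) dt = (α+β+1+2n)/(1-x²)`. -/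
theorem jacobi_An_eq
    (α β : ℝ) (hα : 0 < α) (hβ : 0 < β) (n : ℕ) (P : Polynomial ℝ)
    (hdeg : P.natDegree = n) (hlead : 0 < P.leadingCoeff)
    (horth : ∀ q : Polynomial ℝ, q.degree < n →
      ∫ t in Set.Ioo (-1 : ℝ) 1,
        P.eval t * q.eval t * ((1 - t) ^ α * (1 + t) ^ β) = 0)
    (hnorm : ∫ t in Set.Ioo (-1 : ℝ) 1,
      (P.eval t) ^ 2 * ((1 - t) ^ α * (1 + t) ^ β) = 1) :
    ∀ x ∈ Set.Ioo (-1 : ℝ) 1,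
      ∫ t in Set.Ioo (-1 : ℝ) 1,
        (P.eval t) ^ 2 * ((1 - t) ^ α * (1 + t) ^ β) *
          (((α / (1 - t) - β / (1 + t)) - (α / (1 - x) - β / (1 + x))) / (t - x)) =
        (α + β + 1 + 2 * n) / (1 - x ^ 2) := by
  intro x hx
  simp only [← integral_Ioc_eq_integral_Ioo,
    ← intervalIntegral.integral_of_le (by norm_num : (-1 : ℝ) ≤ 1)] at horth hnorm ⊢
  have h := jacobi_An_eq_general hα hβ hdeg.le horth hx.2.ne hx.1.ne'
  simpa only [slope_def_field, jacobiFieldDeriv, jacobiWeight, hnorm, mul_one] using h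
end

section
/- Let Q(x) = ∑_{k=0}^m d_k·x^{2k} be an even real polynomial with d_k ≥ 0 for k = 1,…,m. Then for every j ≥ 0 there is a real polynomial p_j with nonnegative coefficients, all of whose nonzero monomials have exponents of the same parity as j, such that the j-th derivative of x ↦ e^{Q(x)} equals p_j(x)·e^{Q(x)} for all x ∈ ℝ. In particular, every even-order derivative of e^{Q} is nonnegative on ℝ. -/
open Real Filter Set Finset

/-! If `f' = q f` with `q` a polynomial, then `f⁽ʲ⁾ = pⱼ f` where `p₀ = 1` and
`pⱼ₊₁ = pⱼ' + pⱼ q`. For `f = exp ∘ Q` one has `q = Q'`, which has nonnegative coefficients (the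
derivative kills the constant term of `Q`, the only one of arbitrary sign) and only odd exponents.
Differentiation and multiplication by such a `q` both preserve nonnegativity of the coefficients and
both switch the parity of the exponents. -/

section

open Polynomial

section ExponentClass

variable {R : Type*} [Semiring R] {n : ℕ} {a b : ZMod n} {p q : R[X]}

/-- The polynomials all of whose exponents lie in the residue class `a` modulo `n`, that is, the
component of degree `a` of the `ZMod n`-grading of `R[X]`. For `n = 2` these are the even (`a = 0`)
and the odd (`a = 1`) polynomials. -/
def exponentClass (R : Type*) [Semiring R] {n : ℕ} (a : ZMod n) : Submodule R R[X] where
  carrier := {p | ∀ i, p.coeff i ≠ 0 → (i : ZMod n) = a}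
  zero_mem' i hi := absurd (coeff_zero i) hi
  add_mem' {p q} hp hq i hi := by
    by_cases hpi : p.coeff i = 0
    · exact hq i fun hqi => hi (by rw [coeff_add, hpi, hqi, add_zero])
    · exact hp i hpi
  smul_mem' c p hp i hi := hp i fun hpi => hi (by rw [coeff_smul, hpi, smul_zero])

theorem mem_exponentClass : p ∈ exponentClass R a ↔ ∀ i, p.coeff i ≠ 0 → (i : ZMod n) = a :=
  Iff.rfl

theorem monomial_mem_exponentClass (k : ℕ) (c : R) :
    monomial k c ∈ exponentClass R (k : ZMod n) := by
  intro i hi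
  rw [coeff_monomial, ite_ne_right_iff] at hi
  rw [hi.1]

theorem one_mem_exponentClass : (1 : R[X]) ∈ exponentClass R (0 : ZMod n) := by
  simpa using monomial_mem_exponentClass (n := n) 0 (1 : R)

theorem mul_mem_exponentClass (hp : p ∈ exponentClass R a) (hq : q ∈ exponentClass R b) :
    p * q ∈ exponentClass R (a + b) := by
  intro i hi
  rw [coeff_mul] at hi
  obtain ⟨⟨k, l⟩, hkl, hne⟩ := exists_ne_zero_of_sum_ne_zero hi
  rw [← mem_antidiagonal.mp hkl, Nat.cast_add, hp k (left_ne_zero_of_mul hne),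
    hq l (right_ne_zero_of_mul hne)]

theorem derivative_mem_exponentClass (hp : p ∈ exponentClass R a) :
    derivative p ∈ exponentClass R (a - 1) := by
  intro i hi
  rw [coeff_derivative] at hi
  rw [eq_sub_iff_add_eq]
  exact_mod_cast hp (i + 1) (left_ne_zero_of_mul hi)

end ExponentClass

section NonnegCoeffs

variable {R : Type*} [Semiring R] [PartialOrder R] [IsOrderedRing R] {p : R[X]}

/-- The polynomials with nonnegative coefficients, as a subsemiring of `R[X]`. -/
def nonnegCoeffs (R : Type*) [Semiring R] [PartialOrder R] [IsOrderedRing R] :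
    Subsemiring R[X] where
  carrier := {p | ∀ i, 0 ≤ p.coeff i}
  zero_mem' i := (coeff_zero i).ge
  one_mem' i := by rw [coeff_one]; split_ifs <;> simp
  add_mem' {p q} hp hq i := by rw [coeff_add]; exact add_nonneg (hp i) (hq i)
  mul_mem' {p q} hp hq i := by
    rw [coeff_mul]; exact sum_nonneg fun k _ => mul_nonneg (hp k.1) (hq k.2)

theorem mem_nonnegCoeffs : p ∈ nonnegCoeffs R ↔ ∀ i, 0 ≤ p.coeff i :=
  Iff.rfl

theorem monomial_mem_nonnegCoeffs (k : ℕ) {c : R} (hc : 0 ≤ c) :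
    monomial k c ∈ nonnegCoeffs R := by
  intro i
  rw [coeff_monomial]
  split_ifs <;> simp [hc]

theorem derivative_mem_nonnegCoeffs (hp : p ∈ nonnegCoeffs R) :
    derivative p ∈ nonnegCoeffs R := by
  intro i
  rw [coeff_derivative]
  exact mul_nonneg (hp (i + 1)) (add_nonneg (Nat.cast_nonneg i) zero_le_one)

end NonnegCoeffs

theorem eval_nonneg_of_mem_nonnegCoeffs_of_mem_exponentClass {R : Type*} [Semiring R]
    [LinearOrder R] [IsOrderedRing R] [ExistsAddOfLE R] {p : R[X]} (hp : p ∈ nonnegCoeffs R)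
    (hp_even : p ∈ exponentClass R (0 : ZMod 2)) (x : R) : 0 ≤ p.eval x := by
  rw [eval_eq_sum]
  refine sum_nonneg fun i hi => mul_nonneg (mem_nonnegCoeffs.mp hp i) (Even.pow_nonneg ?_ x)
  exact ZMod.natCast_eq_zero_iff_even.mp (mem_exponentClass.mp hp_even i (mem_support_iff.mp hi))

section SumMonomial

variable {R : Type*} [Semiring R] {s : Finset ℕ} {d : ℕ → R}

theorem derivative_sum_monomial_mul_mem_exponentClass (n : ℕ) :
    derivative (∑ k ∈ s, monomial (n * k) (d k)) ∈ exponentClass R (-1 : ZMod n) := by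
  rw [← zero_sub]
  refine derivative_mem_exponentClass (Submodule.sum_mem _ fun k _ => ?_)
  simpa using monomial_mem_exponentClass (n := n) (n * k) (d k)

theorem derivative_sum_monomial_mul_mem_nonnegCoeffs [PartialOrder R] [IsOrderedRing R] (n : ℕ)
    (hd : ∀ k ∈ s, k ≠ 0 → 0 ≤ d k) :
    derivative (∑ k ∈ s, monomial (n * k) (d k)) ∈ nonnegCoeffs R := by
  rw [derivative_sum]
  refine Subsemiring.sum_mem _ fun k hk => ?_
  rcases eq_or_ne k 0 with rfl | hk0
  · simp
  · exact derivative_mem_nonnegCoeffs (monomial_mem_nonnegCoeffs _ (hd k hk hk0))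

end SumMonomial

section IteratedDerivFactor

variable {R : Type*} [Semiring R] {q : R[X]}

/-- A polynomial `pⱼ` such that every solution of the differential equation `f' = q f` satisfies
`f⁽ʲ⁾ = pⱼ f`. -/
noncomputable def iteratedDerivFactor (q : R[X]) : ℕ → R[X]
  | 0 => 1
  | j + 1 => derivative (iteratedDerivFactor q j) + iteratedDerivFactor q j * q

theorem iteratedDerivFactor_mem_exponentClass {n : ℕ} (hq : q ∈ exponentClass R (-1 : ZMod n))
    (j : ℕ) : iteratedDerivFactor q j ∈ exponentClass R (-j : ZMod n) := by
  induction j with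
  | zero => simpa only [iteratedDerivFactor, Nat.cast_zero, neg_zero] using one_mem_exponentClass
  | succ j ih =>
    have hclass : -((j + 1 : ℕ) : ZMod n) = -j + -1 := by push_cast; ring
    rw [hclass]
    refine add_mem ?_ (mul_mem_exponentClass ih hq)
    simpa only [sub_eq_add_neg] using derivative_mem_exponentClass ih

theorem iteratedDerivFactor_mem_nonnegCoeffs [PartialOrder R] [IsOrderedRing R]
    (hq : q ∈ nonnegCoeffs R) (j : ℕ) : iteratedDerivFactor q j ∈ nonnegCoeffs R := by
  induction j with
  | zero => exact one_mem _
  | succ j ih => exact add_mem (derivative_mem_nonnegCoeffs ih) (mul_mem ih hq)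

end IteratedDerivFactor

theorem iteratedDeriv_eq_iteratedDerivFactor_smul {𝕜 E : Type*} [NontriviallyNormedField 𝕜]
    [NormedAddCommGroup E] [NormedSpace 𝕜 E] {q : 𝕜[X]} {f : 𝕜 → E}
    (hf : ∀ x, HasDerivAt f (q.eval x • f x) x) (j : ℕ) (x : 𝕜) :
    iteratedDeriv j f x = (iteratedDerivFactor q j).eval x • f x := by
  induction j generalizing x with
  | zero => simp [iteratedDerivFactor]
  | succ j ih =>
    rw [iteratedDeriv_succ, funext ih,
      (((iteratedDerivFactor q j).hasDerivAt x).fun_smul (hf x)).deriv, iteratedDerivFactor,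
      eval_add, eval_mul, add_smul, mul_smul, add_comm]

theorem hasDerivAt_exp_eval (P : ℝ[X]) (x : ℝ) :
    HasDerivAt (fun y => exp (P.eval y)) ((derivative P).eval x • exp (P.eval x)) x := by
  simpa only [smul_eq_mul, mul_comm] using (P.hasDerivAt x).exp

end

/-- Let `Q(x) = ∑_{k=0}^m d_k·x^{2k}` with `d_k ≥ 0` for `k = 1,…,m`.
Then for every `j` the `j`-th derivative of `e^{Q}` equals `p_j(x)·e^{Q(x)}` for a
polynomial `p_j` with nonnegative coefficients all of whose nonzero monomials have exponents
of the same parity as `j`; in particular every even-order derivative of `e^{Q}` is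
nonnegative on `ℝ`. -/
theorem deriv_exp_even_poly
    (m : ℕ) (d : ℕ → ℝ) (hd : ∀ k, 1 ≤ k → k ≤ m → 0 ≤ d k)
    (Q : ℝ → ℝ) (hQ : ∀ x, Q x = ∑ k ∈ Finset.range (m + 1), d k * x ^ (2 * k)) :
    (∀ j : ℕ, ∃ p : Polynomial ℝ,
      (∀ i, 0 ≤ p.coeff i) ∧
      (∀ i, p.coeff i ≠ 0 → i % 2 = j % 2) ∧
      (∀ x : ℝ, iteratedDeriv j (fun y => Real.exp (Q y)) x = p.eval x * Real.exp (Q x))) ∧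
    (∀ j : ℕ, ∀ x : ℝ, 0 ≤ iteratedDeriv (2 * j) (fun y => Real.exp (Q y)) x) := by
  let P : Polynomial ℝ := ∑ k ∈ range (m + 1), Polynomial.monomial (2 * k) (d k)
  obtain rfl : Q = fun x => P.eval x := by
    funext x
    simp only [hQ, P, Polynomial.eval_finsetSum, Polynomial.eval_monomial]
  let p := iteratedDerivFactor (Polynomial.derivative P)
  have hp_nonneg : ∀ j, p j ∈ nonnegCoeffs ℝ :=
    iteratedDerivFactor_mem_nonnegCoeffs <| derivative_sum_monomial_mul_mem_nonnegCoeffs 2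
      fun k hk hk0 => hd k (Nat.one_le_iff_ne_zero.mpr hk0) (mem_range_succ_iff.mp hk)
  have hp_parity (j : ℕ) : p j ∈ exponentClass ℝ (j : ZMod 2) := by
    simpa only [ZMod.neg_eq_self_mod_two] using
      iteratedDerivFactor_mem_exponentClass (derivative_sum_monomial_mul_mem_exponentClass 2) j
  have hp_deriv : ∀ j x,
      iteratedDeriv j (fun y => exp (P.eval y)) x = (p j).eval x * exp (P.eval x) :=
    iteratedDeriv_eq_iteratedDerivFactor_smul (hasDerivAt_exp_eval P)
  refine ⟨fun j => ⟨p j, mem_nonnegCoeffs.mp (hp_nonneg j), ?_, hp_deriv j⟩, fun j x => ?_⟩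
  · exact fun i hi =>
      (ZMod.natCast_eq_natCast_iff' i j 2).mp (mem_exponentClass.mp (hp_parity j) i hi)
  · have hp_even : p (2 * j) ∈ exponentClass ℝ (0 : ZMod 2) := by
      simpa only [ZMod.natCast_eq_zero_iff_even.mpr (even_two_mul j)] using hp_parity (2 * j)
    rw [hp_deriv]
    exact mul_nonneg (eval_nonneg_of_mem_nonnegCoeffs_of_mem_exponentClass (hp_nonneg _) hp_even x)
      (exp_pos _).le
end

section
/- Let Q(x) = ∑_{k=0}^m d_k·x^{2k} with d_k ≥ 0 for k = 1,…,m, and w = e^{−Q} on ℝ. Let p_n be the n-th orthonormal polynomial with respect to w, with leading coefficients γ_n, ρ_n = γ_{n−1}/γ_n, and A_n(x) = ρ_n·∫_ℝ p_n(t)²·w(t)·(Q'(t) − Q'(x))/(t − x) dt, and set w_n = w·ρ_n/A_n. Then for every n ∈ ℕ the 2n-th derivative of 1/w_n, i.e. of the function x ↦ (A_n(x)/ρ_n)·e^{Q(x)}, is nonnegative on all of ℝ. -/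
open Real Filter Set Finset MeasureTheory

/-!
Expanding `(Q'(t) - Q'(x)) / (t - x)` into monomials `t ^ j * x ^ l` writes `A_n / ρ_n` as a
polynomial in `x` whose coefficients are nonnegative multiples of the moments of `p_n² w`. Since
`Q` is even, so is `p_n²`, and hence the odd moments vanish: `A_n / ρ_n` has nonnegative
coefficients and only even powers. Differentiating `r * exp Q` gives `(r' + r * Q') * exp Q`, and
`r ↦ r' + r * Q'` keeps coefficients nonnegative while flipping the parity of the exponents, so
after an even number of steps the polynomial factor is nonnegative on the whole line.
-/

section FreudType

open Polynomial

section ParityCone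

variable {R : Type*}

section Semiring

variable [Semiring R] [PartialOrder R] [IsOrderedRing R]

variable (R) in
/-- The additive monoid of polynomials with nonnegative coefficients all of whose exponents have
parity `e`. Parities live in `ZMod 2`, so that they add under multiplication. -/
def parityCone (e : ZMod 2) : AddSubmonoid R[X] where
  carrier := {p | ∀ i, 0 ≤ p.coeff i ∧ (p.coeff i ≠ 0 → (i : ZMod 2) = e)}
  zero_mem' := by simp
  add_mem' {p q} hp hq i := by
    refine ⟨by simpa using add_nonneg (hp i).1 (hq i).1, fun h => ?_⟩
    by_cases hpi : p.coeff i = 0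
    · exact (hq i).2 (by simpa [hpi] using h)
    · exact (hp i).2 hpi

variable {e f : ZMod 2} {p q : R[X]}

lemma monomial_mem_parityCone {k : ℕ} {c : R} (hc : 0 ≤ c) (hk : c ≠ 0 → (k : ZMod 2) = e) :
    monomial k c ∈ parityCone R e := by
  intro i
  rw [coeff_monomial]
  split_ifs with h
  · exact ⟨hc, h ▸ hk⟩
  · simp

lemma mul_mem_parityCone (hp : p ∈ parityCone R e) (hq : q ∈ parityCone R f) :
    p * q ∈ parityCone R (e + f) := by
  intro i
  rw [coeff_mul]
  refine ⟨Finset.sum_nonneg fun ij _ => mul_nonneg (hp _).1 (hq _).1, fun h => ?_⟩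
  obtain ⟨ij, hij, hne⟩ := Finset.exists_ne_zero_of_sum_ne_zero h
  rw [← Finset.HasAntidiagonal.mem_antidiagonal.1 hij, Nat.cast_add,
    (hp _).2 (left_ne_zero_of_mul hne), (hq _).2 (right_ne_zero_of_mul hne)]

lemma derivative_mem_parityCone (hp : p ∈ parityCone R e) :
    derivative p ∈ parityCone R (e + 1) := by
  intro i
  rw [coeff_derivative]
  refine ⟨mul_nonneg (hp _).1 (by exact_mod_cast (i + 1).cast_nonneg), fun h => ?_⟩
  have hi : (i : ZMod 2) + 1 = e := by exact_mod_cast (hp _).2 (left_ne_zero_of_mul h)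
  rw [← hi, add_assoc, CharTwo.add_self_eq_zero, add_zero]

lemma even_of_mem_parityCone_zero (hp : p ∈ parityCone R 0) {i : ℕ} (hi : p.coeff i ≠ 0) :
    Even i :=
  ZMod.natCast_eq_zero_iff_even.1 ((hp i).2 hi)

end Semiring

section Ring

variable [Ring R] [PartialOrder R] [IsOrderedRing R]

lemma eval_even_of_mem_parityCone_zero {p : R[X]} (hp : p ∈ parityCone R 0) :
    Function.Even fun x => p.eval x := by
  intro x
  simp only [eval_eq_sum, Polynomial.sum]
  refine Finset.sum_congr rfl fun i hi => ?_
  rw [(even_of_mem_parityCone_zero hp (mem_support_iff.1 hi)).neg_pow]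

lemma eval_even_of_sub_C_mem_parityCone_zero {q : R[X]} {a : R} (hq : q - C a ∈ parityCone R 0) :
    Function.Even fun x => q.eval x :=
  fun x => by simpa using eval_even_of_mem_parityCone_zero hq x

end Ring

section LinearOrder

variable [Ring R] [LinearOrder R] [IsStrictOrderedRing R] {p : R[X]}

lemma coeff_mul_pow_nonneg_of_mem_parityCone_zero (hp : p ∈ parityCone R 0) (i : ℕ) (x : R) :
    0 ≤ p.coeff i * x ^ i := by
  by_cases hi : p.coeff i = 0
  · simp [hi]
  · exact mul_nonneg (hp i).1 ((even_of_mem_parityCone_zero hp hi).pow_nonneg x)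

lemma eval_nonneg_of_mem_parityCone_zero (hp : p ∈ parityCone R 0) (x : R) : 0 ≤ p.eval x := by
  rw [eval_eq_sum_range]
  exact Finset.sum_nonneg fun i _ => coeff_mul_pow_nonneg_of_mem_parityCone_zero hp i x

lemma leadingCoeff_mul_pow_le_eval_of_mem_parityCone_zero (hp : p ∈ parityCone R 0) (x : R) :
    p.leadingCoeff * x ^ p.natDegree ≤ p.eval x := by
  rw [eval_eq_sum_range]
  exact Finset.single_le_sum (f := fun i => p.coeff i * x ^ i)
    (fun i _ => coeff_mul_pow_nonneg_of_mem_parityCone_zero hp i x)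
    (Finset.self_mem_range_succ p.natDegree)

end LinearOrder

end ParityCone

section TwistedDerivative

/-- The operator `r ↦ r' + r q'`, i.e. differentiation conjugated by multiplication with `exp q`: it
gives the polynomial factor in `(r exp q)' = (r' + r q') exp q`. -/
noncomputable def twistedDerivative {R : Type*} [Semiring R] (q r : R[X]) : R[X] :=
  derivative r + r * derivative q

lemma iterate_twistedDerivative_mem_parityCone {R : Type*} [Semiring R] [PartialOrder R]
    [IsOrderedRing R] {e : ZMod 2} {p q : R[X]} (hq : derivative q ∈ parityCone R 1)
    (hp : p ∈ parityCone R e) (k : ℕ) : (twistedDerivative q)^[k] p ∈ parityCone R (e + k) := by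
  induction k with
  | zero => simpa using hp
  | succ k ih =>
    rw [Function.iterate_succ_apply', Nat.cast_succ, ← add_assoc]
    exact add_mem (derivative_mem_parityCone ih) (mul_mem_parityCone ih hq)

lemma iteratedDeriv_eval_mul_exp_eval (p q : ℝ[X]) (k : ℕ) :
    iteratedDeriv k (fun x => p.eval x * exp (q.eval x)) =
      fun x => ((twistedDerivative q)^[k] p).eval x * exp (q.eval x) := by
  induction k with
  | zero => simp
  | succ k ih =>
    rw [iteratedDeriv_succ, ih, Function.iterate_succ_apply']
    funext x
    set r := (twistedDerivative q)^[k] p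
    rw [((r.hasDerivAt x).fun_mul (q.hasDerivAt x).exp).deriv, twistedDerivative, eval_add,
      eval_mul]
    ring

lemma iteratedDeriv_eval_mul_exp_eval_nonneg {p q : ℝ[X]} (hp : p ∈ parityCone ℝ 0)
    (hq : derivative q ∈ parityCone ℝ 1) {k : ℕ} (hk : Even k) (x : ℝ) :
    0 ≤ iteratedDeriv k (fun y => p.eval y * exp (q.eval y)) x := by
  rw [iteratedDeriv_eval_mul_exp_eval]
  have hmem := iterate_twistedDerivative_mem_parityCone hq hp k
  rw [hk.natCast_zmod_two, add_zero] at hmem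
  exact mul_nonneg (eval_nonneg_of_mem_parityCone_zero hmem x) (exp_pos _).le

end TwistedDerivative

section DividedDifference

lemma integral_eq_zero_of_odd {G E : Type*} [AddGroup G] [MeasurableSpace G] [MeasurableNeg G]
    [NormedAddCommGroup E] [NormedSpace ℝ E] {μ : Measure G} [μ.IsNegInvariant] {f : G → E}
    (hf : f.Odd) : ∫ x, f x ∂μ = 0 := by
  have h : ∫ x, f x ∂μ = -∫ x, f x ∂μ := by
    rw [← integral_neg, ← integral_neg_eq_self]
    simp_rw [hf.eq]
  have : IsAddTorsionFree E := .of_isTorsionFree ℝ E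
  exact self_eq_neg.1 h

lemma eval_sub_eval_eq_sum_mul_sub {R : Type*} [CommRing R] (r : R[X]) (t x : R) :
    r.eval t - r.eval x =
      (∑ i ∈ r.support, ∑ j ∈ Finset.range i, r.coeff i * x ^ (i - 1 - j) * t ^ j) * (t - x) := by
  simp only [eval_eq_sum, Polynomial.sum]
  rw [← Finset.sum_sub_distrib, Finset.sum_mul]
  refine Finset.sum_congr rfl fun i _ => ?_
  rw [← mul_sub, ← geom_sum₂_mul, ← mul_assoc, Finset.mul_sum]
  congr 1
  exact Finset.sum_congr rfl fun j _ => by ring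

variable {V : ℝ → ℝ} {r : ℝ[X]}

/-- The polynomial `x ↦ ∫ V(t) (r(t) - r(x)) / (t - x) dt`, written out in terms of the moments of
the weight `V`; it represents that integral only when these moments are finite. -/
noncomputable def dividedDifferenceIntegral (V : ℝ → ℝ) (r : ℝ[X]) : ℝ[X] :=
  ∑ i ∈ r.support, ∑ j ∈ Finset.range i,
    monomial (i - 1 - j) (r.coeff i * ∫ t, V t * t ^ j)

lemma eval_dividedDifferenceIntegral (hV : ∀ j < r.natDegree, Integrable fun t => V t * t ^ j)
    (x : ℝ) :
    (dividedDifferenceIntegral V r).eval x =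
      ∫ t, V t * ((r.eval t - r.eval x) / (t - x)) := by
  have hint {i j : ℕ} (hi : i ∈ r.support) (hj : j ∈ Finset.range i) :
      Integrable fun t => r.coeff i * x ^ (i - 1 - j) * (V t * t ^ j) :=
    (hV j ((Finset.mem_range.1 hj).trans_le (le_natDegree_of_mem_supp i hi))).const_mul _
  have hae : ∀ᵐ t : ℝ, V t * ((r.eval t - r.eval x) / (t - x)) =
      ∑ i ∈ r.support, ∑ j ∈ Finset.range i,
        r.coeff i * x ^ (i - 1 - j) * (V t * t ^ j) := by
    filter_upwards [Measure.ae_ne volume x] with t ht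
    rw [eval_sub_eval_eq_sum_mul_sub, mul_div_cancel_right₀ _ (sub_ne_zero.2 ht)]
    simp only [Finset.mul_sum]
    exact Finset.sum_congr rfl fun i _ => Finset.sum_congr rfl fun j _ => by ring
  rw [integral_congr_ae hae,
    integral_finsetSum _ fun i hi => integrable_finsetSum _ fun j hj => hint hi hj,
    dividedDifferenceIntegral, eval_finsetSum]
  refine Finset.sum_congr rfl fun i hi => ?_
  rw [integral_finsetSum _ fun j hj => hint hi hj, eval_finsetSum]
  refine Finset.sum_congr rfl fun j _ => ?_
  rw [integral_const_mul, eval_monomial]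
  ring

lemma integral_even_mul_pow_eq_zero (hV : V.Even) {j : ℕ} (hj : Odd j) :
    ∫ t, V t * t ^ j = 0 :=
  integral_eq_zero_of_odd fun t => by rw [hV.eq, hj.neg_pow, mul_neg]

lemma integral_even_mul_pow_nonneg (hV : V.Even) (hV₀ : ∀ t, 0 ≤ V t) (j : ℕ) :
    0 ≤ ∫ t, V t * t ^ j := by
  rcases Nat.even_or_odd j with hj | hj
  · exact integral_nonneg fun t => mul_nonneg (hV₀ t) (hj.pow_nonneg t)
  · exact (integral_even_mul_pow_eq_zero hV hj).ge

lemma dividedDifferenceIntegral_mem_parityCone {e : ZMod 2} (hV : V.Even) (hV₀ : ∀ t, 0 ≤ V t)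
    (hr : r ∈ parityCone ℝ e) : dividedDifferenceIntegral V r ∈ parityCone ℝ (e + 1) := by
  refine sum_mem fun i hi => sum_mem fun j hj => monomial_mem_parityCone
    (mul_nonneg (hr i).1 (integral_even_mul_pow_nonneg hV hV₀ j)) fun hne => ?_
  have hj_even : (j : ZMod 2) = 0 := ZMod.natCast_eq_zero_iff_even.2 <|
    Nat.not_odd_iff_even.1 fun hj' =>
      right_ne_zero_of_mul hne (integral_even_mul_pow_eq_zero hV hj')
  obtain ⟨l, rfl⟩ := Nat.exists_eq_add_of_lt (Finset.mem_range.1 hj)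
  have hl : (l : ZMod 2) + 1 = e := by
    simpa [hj_even] using (hr _).2 (mem_support_iff.1 hi)
  rw [show j + l + 1 - 1 - j = l by omega, ← hl, add_assoc, CharTwo.add_self_eq_zero, add_zero]

end DividedDifference

section Orthogonal

variable {W : ℝ → ℝ} {n : ℕ} {P : ℝ[X]}

/-- `P` is orthogonal, with respect to the weight `W`, to all polynomials of degree less than
`n`. -/
def OrthogonalToDegreeLT (W : ℝ → ℝ) (n : ℕ) (P : ℝ[X]) : Prop :=
  ∀ q : ℝ[X], q.degree < n → ∫ t, P.eval t * q.eval t * W t = 0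

lemma OrthogonalToDegreeLT.comp_neg_X (hW : W.Even) (hP : OrthogonalToDegreeLT W n P) :
    OrthogonalToDegreeLT W n (P.comp (-X)) := by
  intro q hq
  rw [← hP (q.comp (-X)) (by rwa [degree_comp_neg_X]), ← integral_neg_eq_self]
  simp [hW.eq, eval_comp]

lemma OrthogonalToDegreeLT.sub_C_mul {S : ℝ[X]}
    (hW_int : ∀ p : ℝ[X], Integrable fun t => p.eval t * W t)
    (hS : OrthogonalToDegreeLT W n S) (hP : OrthogonalToDegreeLT W n P) (c : ℝ) :
    OrthogonalToDegreeLT W n (S - C c * P) := by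
  intro q hq
  have hS_int : Integrable fun t => S.eval t * q.eval t * W t := by simpa using hW_int (S * q)
  have hP_int : Integrable fun t => P.eval t * q.eval t * W t := by simpa using hW_int (P * q)
  calc ∫ t, (S - C c * P).eval t * q.eval t * W t
      = ∫ t, (S.eval t * q.eval t * W t - c * (P.eval t * q.eval t * W t)) := by
        congr with t
        simp only [eval_sub, eval_mul, eval_C]
        ring
    _ = 0 := by
        rw [integral_sub hS_int (hP_int.const_mul c), integral_const_mul, hS q hq, hP q hq,
          mul_zero, sub_zero]

lemma eq_zero_of_integral_mul_self_mul_eq_zero (hW₀ : ∀ t, 0 < W t)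
    (hP_int : Integrable fun t => P.eval t * P.eval t * W t)
    (hP : ∫ t, P.eval t * P.eval t * W t = 0) : P = 0 := by
  have hae := (integral_eq_zero_iff_of_nonneg
    (fun t => mul_nonneg (mul_self_nonneg _) (hW₀ t).le) hP_int).1 hP
  have hP_ae : (fun t => P.eval t) =ᵐ[volume] fun _ => 0 := by
    filter_upwards [hae] with t ht
    simpa [(hW₀ t).ne'] using ht
  have hP_eval := (P.continuous.ae_eq_iff_eq volume continuous_const).1 hP_ae
  exact Polynomial.funext fun t => by simpa using congrFun hP_eval t

lemma OrthogonalToDegreeLT.eq_zero_of_degree_lt (hW₀ : ∀ t, 0 < W t)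
    (hW_int : ∀ p : ℝ[X], Integrable fun t => p.eval t * W t)
    (hP : OrthogonalToDegreeLT W n P) (hdeg : P.degree < n) : P = 0 :=
  eq_zero_of_integral_mul_self_mul_eq_zero hW₀ (by simpa using hW_int (P * P)) (hP P hdeg)

lemma degree_comp_neg_X_sub_lt {R : Type*} [CommRing R] {P : R[X]}
    (hdeg : P.natDegree ≤ n) :
    (P.comp (-X) - C ((-1) ^ n) * P).degree < (n : WithBot ℕ) := by
  rw [degree_lt_iff_coeff_zero]
  intro i hi
  have hcoeff : (P.comp (-X)).coeff i = P.coeff i * (-1) ^ i := by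
    rw [show (-X : R[X]) = C (-1) * X by simp, comp_C_mul_X_coeff]
  rw [coeff_sub, coeff_C_mul, hcoeff]
  rcases hi.eq_or_lt with rfl | hlt
  · ring
  · simp [coeff_eq_zero_of_natDegree_lt (hdeg.trans_lt hlt)]

lemma OrthogonalToDegreeLT.comp_neg_X_eq (hW : W.Even) (hW₀ : ∀ t, 0 < W t)
    (hW_int : ∀ p : ℝ[X], Integrable fun t => p.eval t * W t)
    (hP : OrthogonalToDegreeLT W n P) (hdeg : P.natDegree ≤ n) :
    P.comp (-X) = C ((-1) ^ n) * P :=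
  sub_eq_zero.1 <| ((hP.comp_neg_X hW).sub_C_mul hW_int hP _).eq_zero_of_degree_lt hW₀ hW_int
    (degree_comp_neg_X_sub_lt hdeg)

lemma OrthogonalToDegreeLT.eval_sq_even (hW : W.Even) (hW₀ : ∀ t, 0 < W t)
    (hW_int : ∀ p : ℝ[X], Integrable fun t => p.eval t * W t)
    (hP : OrthogonalToDegreeLT W n P) (hdeg : P.natDegree ≤ n) :
    Function.Even fun t => P.eval t ^ 2 := by
  intro t
  have h : P.eval (-t) = (-1) ^ n * P.eval t := by
    simpa [eval_comp] using congrArg (eval t) (hP.comp_neg_X_eq hW hW₀ hW_int hdeg)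
  simp only [h, mul_pow, ← pow_mul, (even_two.mul_left n).neg_one_pow, one_mul]

end Orthogonal

section Integrability

lemma integrable_eval_mul_exp_neg {f : ℝ → ℝ} (hf : AEStronglyMeasurable f) {b c : ℝ} (hc : 0 < c)
    (hfc : ∀ t, b + c * t ^ 2 ≤ f t) (p : ℝ[X]) :
    Integrable fun t => p.eval t * exp (-f t) := by
  induction p using Polynomial.induction_on' with
  | add p q hp hq => simpa only [eval_add, add_mul] using hp.fun_add hq
  | monomial j a =>
    have hgauss : Integrable fun t : ℝ => a * exp (-b) * (t ^ j * exp (-c * t ^ 2)) := by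
      have hj : (-1 : ℝ) < j := neg_one_lt_zero.trans_le j.cast_nonneg
      simpa using (integrable_rpow_mul_exp_neg_mul_sq hc hj).const_mul (a * exp (-b))
    refine hgauss.mono ?_ (Eventually.of_forall fun t => ?_)
    · exact (Polynomial.continuous _).aestronglyMeasurable.mul
        (continuous_exp.comp_aestronglyMeasurable hf.neg)
    have hexp : exp (-f t) ≤ exp (-b) * exp (-c * t ^ 2) := by
      rw [← exp_add]
      exact exp_le_exp.2 (by linarith [hfc t])
    simp only [eval_monomial, norm_mul, norm_eq_abs, abs_exp]
    calc |a| * |t ^ j| * exp (-f t)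
        ≤ |a| * |t ^ j| * (exp (-b) * exp (-c * t ^ 2)) := by gcongr
      _ = |a| * exp (-b) * (|t ^ j| * exp (-c * t ^ 2)) := by ring

lemma sq_sub_one_le_pow {R : Type*} [CommRing R] [LinearOrder R] [IsStrictOrderedRing R] (t : R)
    {k : ℕ} (hk : Even k) (hk₀ : k ≠ 0) : t ^ 2 - 1 ≤ t ^ k := by
  obtain ⟨l, rfl⟩ := hk.exists_two_nsmul
  rw [smul_eq_mul, pow_mul]
  rcases le_total 1 (t ^ 2) with h | h
  · linarith [le_self_pow₀ h (right_ne_zero_of_mul hk₀)]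
  · linarith [pow_nonneg (sq_nonneg t) l]

lemma mul_sq_sub_one_le_eval_of_mem_parityCone_zero {R : Type*} [CommRing R] [LinearOrder R]
    [IsStrictOrderedRing R] {p : R[X]} (hp : p ∈ parityCone R 0) (hdeg : p.natDegree ≠ 0) (t : R) :
    p.leadingCoeff * (t ^ 2 - 1) ≤ p.eval t := by
  have hlead : p.leadingCoeff ≠ 0 := leadingCoeff_ne_zero.2 (by rintro rfl; simp at hdeg)
  calc p.leadingCoeff * (t ^ 2 - 1)
      ≤ p.leadingCoeff * t ^ p.natDegree := by
        have := sq_sub_one_le_pow t (even_of_mem_parityCone_zero hp hlead) hdeg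
        exact mul_le_mul_of_nonneg_left this (hp _).1
    _ ≤ p.eval t := leadingCoeff_mul_pow_le_eval_of_mem_parityCone_zero hp t

lemma integrable_eval_mul_exp_neg_eval {q : ℝ[X]} {a : ℝ} (hq : q - C a ∈ parityCone ℝ 0)
    (hdeg : q.natDegree ≠ 0) (p : ℝ[X]) : Integrable fun t => p.eval t * exp (-q.eval t) := by
  have hdeg' : (q - C a).natDegree ≠ 0 := by rwa [natDegree_sub_C]
  have hlead : 0 < (q - C a).leadingCoeff :=
    (hq _).1.lt_of_ne' (leadingCoeff_ne_zero.2 (by rintro h; simp [h] at hdeg'))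
  refine integrable_eval_mul_exp_neg q.continuous.aestronglyMeasurable
    (b := a - (q - C a).leadingCoeff) hlead (fun t => ?_) p
  have := mul_sq_sub_one_le_eval_of_mem_parityCone_zero hq hdeg' t
  rw [eval_sub, eval_C] at this
  linarith

end Integrability

section ExponentialWeight

variable {q : ℝ[X]} {a : ℝ}

lemma iteratedDeriv_integral_mul_exp_eval_nonneg {V : ℝ → ℝ} (hq : q - C a ∈ parityCone ℝ 0)
    (hV : V.Even) (hV₀ : ∀ t, 0 ≤ V t)
    (hV_int : ∀ j < (derivative q).natDegree, Integrable fun t => V t * t ^ j)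
    {k : ℕ} (hk : Even k) (x : ℝ) :
    0 ≤ iteratedDeriv k (fun y =>
      (∫ t, V t * (((derivative q).eval t - (derivative q).eval y) / (t - y))) *
        exp (q.eval y)) x := by
  have hq' : derivative q ∈ parityCone ℝ 1 := by
    simpa using derivative_mem_parityCone hq
  simp_rw [← eval_dividedDifferenceIntegral hV_int]
  exact iteratedDeriv_eval_mul_exp_eval_nonneg
    (dividedDifferenceIntegral_mem_parityCone hV hV₀ hq') hq' hk x

lemma iteratedDeriv_integral_orthogonal_sq_mul_exp_eval_nonneg (hq : q - C a ∈ parityCone ℝ 0)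
    {n : ℕ} {P : ℝ[X]} (hdeg : P.natDegree ≤ n)
    (horth : OrthogonalToDegreeLT (fun t => exp (-q.eval t)) n P) {k : ℕ} (hk : Even k) (x : ℝ) :
    0 ≤ iteratedDeriv k (fun y =>
      (∫ t, P.eval t ^ 2 * exp (-q.eval t) *
        (((derivative q).eval t - (derivative q).eval y) / (t - y))) * exp (q.eval y)) x := by
  -- For constant `q` the moments may diverge, but the divided difference vanishes.
  by_cases hq₀ : q.natDegree = 0
  · simp [derivative_of_natDegree_zero hq₀]
  have hW : Function.Even fun t => exp (-q.eval t) := fun t => by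
    simp only [(eval_even_of_sub_C_mem_parityCone_zero hq).eq t]
  have hW_int := integrable_eval_mul_exp_neg_eval hq hq₀
  have hP := horth.eval_sq_even hW (fun t => exp_pos _) hW_int hdeg
  refine iteratedDeriv_integral_mul_exp_eval_nonneg hq (hP.mul_even hW)
    (fun t => mul_nonneg (sq_nonneg _) (exp_pos _).le) (fun j _ => ?_) hk x
  refine (hW_int (P ^ 2 * X ^ j)).congr (Eventually.of_forall fun t => ?_)
  simp only [eval_mul, eval_pow, eval_X, Pi.mul_apply]
  ring

end ExponentialWeight

section FreudExponent

/-- The exponent `Q = ∑_{k ≤ m} d_k X^{2k}` of a Freud-type weight `exp (-Q)`, as a polynomial. -/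
noncomputable def freudExponent {R : Type*} [Semiring R] (m : ℕ) (d : ℕ → R) : R[X] :=
  ∑ k ∈ Finset.range (m + 1), monomial (2 * k) (d k)

lemma eval_freudExponent {R : Type*} [Semiring R] (m : ℕ) (d : ℕ → R) (x : R) :
    (freudExponent m d).eval x = ∑ k ∈ Finset.range (m + 1), d k * x ^ (2 * k) := by
  simp [freudExponent, eval_finsetSum]

lemma freudExponent_sub_C_mem_parityCone {R : Type*} [Ring R] [PartialOrder R] [IsOrderedRing R]
    {m : ℕ} {d : ℕ → R} (hd : ∀ k, 1 ≤ k → k ≤ m → 0 ≤ d k) :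
    freudExponent m d - C (d 0) ∈ parityCone R 0 := by
  rw [freudExponent, Finset.sum_range_succ', mul_zero, monomial_zero_left, add_sub_cancel_right]
  refine sum_mem fun k hk => monomial_mem_parityCone
    (hd (k + 1) le_add_self (Finset.mem_range.1 hk)) fun _ => ?_
  exact (even_two_mul (k + 1)).natCast_zmod_two

theorem freud_type_recip_wn_deriv_nonneg_general
    (m : ℕ) (d : ℕ → ℝ) (hd : ∀ k, 1 ≤ k → k ≤ m → 0 ≤ d k)
    (Q : ℝ → ℝ) (hQ : ∀ x, Q x = ∑ k ∈ Finset.range (m + 1), d k * x ^ (2 * k))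
    (n : ℕ) (P : ℝ[X]) (hdeg : P.natDegree = n)
    (horth : ∀ q : ℝ[X], q.degree < n → ∫ t : ℝ, P.eval t * q.eval t * exp (-(Q t)) = 0)
    (A : ℝ → ℝ)
    (hA : ∀ x : ℝ, A x =
      ∫ t : ℝ, (P.eval t) ^ 2 * exp (-(Q t)) * ((deriv Q t - deriv Q x) / (t - x)))
    (j : ℕ) (x : ℝ) :
    0 ≤ iteratedDeriv (2 * j) (fun y => A y * exp (Q y)) x := by
  obtain rfl : Q = fun x => (freudExponent m d).eval x :=
    funext fun x => (hQ x).trans (eval_freudExponent m d x).symm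
  simp only [hA, Polynomial.deriv]
  exact iteratedDeriv_integral_orthogonal_sq_mul_exp_eval_nonneg
    (freudExponent_sub_C_mem_parityCone hd) hdeg.le horth (even_two_mul j) x

end FreudExponent

end FreudType

/-- Let `Q(x) = ∑_{k=0}^m d_k·x^{2k}` with `d_k ≥ 0` for `k = 1,…,m`,
`w = e^{-Q}` on `ℝ`, `p_n` the `n`-th orthonormal polynomial with respect to `w`, and
`A_n(x)/ρ_n = ∫_ℝ p_n(t)²·w(t)·(Q'(t)-Q'(x))/(t-x) dt`. Then the `2n`-th derivative of
`1/w_n`, i.e. of `x ↦ (A_n(x)/ρ_n)·e^{Q(x)}`, is nonnegative on all of `ℝ`. -/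
theorem freud_type_recip_wn_deriv_nonneg
    (m : ℕ) (d : ℕ → ℝ) (hd : ∀ k, 1 ≤ k → k ≤ m → 0 ≤ d k)
    (Q : ℝ → ℝ) (hQ : ∀ x, Q x = ∑ k ∈ Finset.range (m + 1), d k * x ^ (2 * k))
    (n : ℕ) (P : Polynomial ℝ)
    (hdeg : P.natDegree = n) (hlead : 0 < P.leadingCoeff)
    (horth : ∀ q : Polynomial ℝ, q.degree < n →
      ∫ t : ℝ, P.eval t * q.eval t * Real.exp (-(Q t)) = 0)
    (hnorm : ∫ t : ℝ, (P.eval t) ^ 2 * Real.exp (-(Q t)) = 1)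
    (A : ℝ → ℝ)
    (hA : ∀ x : ℝ, A x =
      ∫ t : ℝ, (P.eval t) ^ 2 * Real.exp (-(Q t)) * ((deriv Q t - deriv Q x) / (t - x))) :
    ∀ x : ℝ, 0 ≤ iteratedDeriv (2 * n) (fun y => A y * Real.exp (Q y)) x := by
  exact freud_type_recip_wn_deriv_nonneg_general m d hd Q hQ n P hdeg horth A hA n
end

section
/- Let Q : ℝ → ℝ be even and differentiable with Q' positive and increasing on (0,∞), and suppose that for some A ≥ 2, Q'(λs) ≥ λ^{A−1}·Q'(s) for all s > 0 and λ ≥ 1. Then for every x > 0 and every t with |t| ≤ x/2: (2/3)·((2^{A−1} − 1)/2^{A−1})·Q'(x)/x ≤ (Q'(t) − Q'(x))/(t − x) ≤ 4·Q'(x)/x. -/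
open Real Filter Set

/-!
An odd function which is nonnegative and monotone on `(0, ∞)` is monotone on the whole line, so for
`|t| ≤ θ x` the growth condition `c * f (θ x) ≤ f x` bounds the increment `f x - f t` below by
`(1 - 1/c) * f x`, and oddness bounds it above by `2 * f x`. Meanwhile `x - t` lies between
`(1 - θ) x` and `(1 + θ) x`. The constants `2/3` and `4` are `1 / (1 + θ)` and `2 / (1 - θ)` at
`θ = 1/2`.
-/

theorem odd_deriv_of_even {𝕜 E : Type*} [NontriviallyNormedField 𝕜] [NormedAddCommGroup E]
    [NormedSpace 𝕜 E] {f : 𝕜 → E} (hf : f.Even) : (deriv f).Odd := by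
  intro x
  have hcomp : (fun y ↦ f (-y)) = f := funext hf
  rw [← neg_eq_iff_eq_neg, ← deriv_comp_neg, hcomp]

theorem monotone_of_odd_of_nonneg_of_monotoneOn_Ioi {G H : Type*}
    [AddCommGroup G] [LinearOrder G] [IsOrderedAddMonoid G]
    [AddCommGroup H] [LinearOrder H] [IsOrderedAddMonoid H] {f : G → H}
    (hodd : f.Odd) (hnonneg : ∀ x, 0 < x → 0 ≤ f x) (hmono : MonotoneOn f (Ioi 0)) :
    Monotone f := by
  refine monotone_of_odd_of_monotoneOn_nonneg hodd fun x hx y _ hxy ↦ ?_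
  rcases (mem_Ici.mp hx).eq_or_lt with rfl | hx
  · rw [hodd.map_zero]
    rcases hxy.eq_or_lt with rfl | hy
    · exact hodd.map_zero.ge
    · exact hnonneg y hy
  · exact hmono hx (hx.trans_le hxy) hxy

section Slope

variable {K : Type*} [Field K] [LinearOrder K] [IsStrictOrderedRing K] {f : K → K} {c θ x t : K}

theorem slope_le_of_odd_of_monotone (hodd : f.Odd) (hmono : Monotone f) (hx : 0 < x) (hθ : θ < 1)
    (hxt : -x ≤ t) (htx : t ≤ θ * x) : slope f x t ≤ 2 / (1 - θ) * (f x / x) := by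
  have hneg : -f x ≤ f t := hodd x ▸ hmono hxt
  have hfx : -f x ≤ f x := hodd x ▸ hmono (neg_le_self hx.le)
  have hgap : 0 < (1 - θ) * x := mul_pos (sub_pos.mpr hθ) hx
  calc slope f x t = (f x - f t) / (x - t) := by rw [slope_comm, slope_def_field]
    _ ≤ (2 * f x) / ((1 - θ) * x) := div_le_div₀ (by linarith) (by linarith) hgap (by linarith)
    _ = 2 / (1 - θ) * (f x / x) := mul_div_mul_comm _ _ _ _

theorem le_slope_of_monotone (hmono : Monotone f) (hx : 0 < x) (hθ : θ < 1) (hc : 0 < c)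
    (hgrow : c * f (θ * x) ≤ f x) (ht : |t| ≤ θ * x) :
    (1 - 1 / c) / (1 + θ) * (f x / x) ≤ slope f x t := by
  obtain ⟨hleft, hright⟩ := abs_le.mp ht
  have hθx : θ * x < x := mul_lt_of_lt_one_left hx hθ
  have hft : f t ≤ f x / c := (hmono hright).trans ((le_div_iff₀' hc).mpr hgrow)
  have hincr : 0 ≤ f x - f t := sub_nonneg.mpr (hmono (hright.trans hθx.le))
  calc (1 - 1 / c) / (1 + θ) * (f x / x) = (f x - f x / c) / ((1 + θ) * x) := by
        rw [div_mul_div_comm, sub_mul, one_mul, one_div_mul_eq_div]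
    _ ≤ (f x - f t) / (x - t) := div_le_div₀ hincr (by linarith) (by linarith) (by linarith)
    _ = slope f x t := by rw [slope_comm, slope_def_field]

theorem divided_difference_Qprime_bounds_general (hodd : f.Odd) (hnonneg : ∀ s, 0 < s → 0 ≤ f s)
    (hmono : MonotoneOn f (Ioi 0)) (hc : 0 < c) (hx : 0 < x) (hgrow : c * f (x / 2) ≤ f x)
    (ht : |t| ≤ x / 2) :
    2 / 3 * ((c - 1) / c) * (f x / x) ≤ (f t - f x) / (t - x) ∧
      (f t - f x) / (t - x) ≤ 4 * (f x / x) := by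
  have hf : Monotone f := monotone_of_odd_of_nonneg_of_monotoneOn_Ioi hodd hnonneg hmono
  have hhalf : (1 / 2 : K) < 1 := one_half_lt_one
  rw [← one_div_mul_eq_div] at hgrow ht
  rw [← slope_def_field]
  constructor
  · convert le_slope_of_monotone hf hx hhalf hc hgrow ht using 2
    field_simp
    ring
  · obtain ⟨hleft, hright⟩ := abs_le.mp ht
    convert slope_le_of_odd_of_monotone hodd hf hx hhalf (by linarith) hright using 2
    norm_num

end Slope

/-- Let `Q` be even and differentiable with `Q'` positive and increasing
on `(0,∞)`, and suppose `Q'(λs) ≥ λ^{A-1}·Q'(s)` for all `s > 0`, `λ ≥ 1`, where `A ≥ 2`.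
Then for every `x > 0` and `|t| ≤ x/2`:
`(2/3)·((2^{A-1}-1)/2^{A-1})·Q'(x)/x ≤ (Q'(t)-Q'(x))/(t-x) ≤ 4·Q'(x)/x`. -/
theorem divided_difference_Qprime_bounds
    (Q : ℝ → ℝ) (hQeven : ∀ x, Q (-x) = Q x) (hQdiff : Differentiable ℝ Q)
    (hQ'pos : ∀ x : ℝ, 0 < x → 0 < deriv Q x)
    (hQ'mono : MonotoneOn (deriv Q) (Set.Ioi (0 : ℝ)))
    (A : ℝ) (hA : 2 ≤ A)
    (hgrow : ∀ s : ℝ, 0 < s → ∀ l : ℝ, 1 ≤ l →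
      l ^ (A - 1) * deriv Q s ≤ deriv Q (l * s)) :
    ∀ x : ℝ, 0 < x → ∀ t : ℝ, |t| ≤ x / 2 →
      (2 / 3) * (((2 : ℝ) ^ (A - 1) - 1) / (2 : ℝ) ^ (A - 1)) * (deriv Q x / x) ≤
          (deriv Q t - deriv Q x) / (t - x) ∧
        (deriv Q t - deriv Q x) / (t - x) ≤ 4 * (deriv Q x / x) := fun x hx _ ht ↦
  divided_difference_Qprime_bounds_general (odd_deriv_of_even hQeven) (fun s hs ↦ (hQ'pos s hs).le)
    hQ'mono (by positivity) hx (by simpa [mul_div_cancel₀] using hgrow (x / 2) (half_pos hx) 2) ht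
end

section
/- Let w = e^{−Q} be a Freud weight on ℝ: Q is even and three times continuously differentiable, Q' > 0 on (0,∞), there exist A, B with 2 ≤ A ≤ (x·Q'(x))'/Q'(x) ≤ B for all x > 0, and there is a constant c with |x·Q'''(x)/Q''(x)| ≤ c for |x| ≥ 1. For each n, let p_n be the n-th orthonormal polynomial with respect to w, with leading coefficients γ_n and ρ_n = γ_{n−1}/γ_n, let A_n(x) = ρ_n·∫_ℝ p_n(t)²·w(t)·(Q'(t) − Q'(x))/(t − x) dt, and let a_u (for u > 0) be the Mhaskar–Rahmanov–Saff number, the unique positive solution of u = (2/π)·∫₀¹ a_u·t·Q'(a_u·t)/√(1−t²) dt. Let L₀ be a constant such that (L₀/2)·a_n > a_{2n+⌊A−1⌋+1} for all n. Then for every L > L₀ there exist constants c₁, c₂ > 0 depending only on L (not on n or x) such that for all n: c₁·n/a_n² ≤ A_n(x)/ρ_n ≤ c₂·n/a_n² whenever |x| ≤ L·a_n, and c₁·Q'(|x|)/|x| ≤ A_n(x)/ρ_n ≤ c₂·Q'(|x|)/|x| whenever |x| ≥ L·a_n. -/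
open Real Filter Set MeasureTheory

/-!
Write `f = Q'` and `g t = f t / t`; the hypothesis `A ≥ 2` says that `g` is nondecreasing in `|t|`.
The identity
`(f t - f x) / (t - x) = (g x + g t) / 2 + (t² - x²) (g t - g x) / (2 (t - x)²)`,
whose last term is nonnegative, bounds the difference quotient below by `(g x + g t) / 2`. Above,
it is at most a multiple of `g R` for `|t| ≤ R` and at most `2 g t ≤ 2 t f t / R²` for `|t| ≥ R`,
as long as `2 |x| ≤ R`. Integrating `t p_n² w'` by parts gives `∫ p_n² w t f = 2n + 1`, and this
turns the upper bound into `A_n / ρ_n ≲ g R` as soon as `n ≲ R f R`.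

For the lower bound, integrating `p_n p_{n-1} w'` by parts gives `∫ p_n p_{n-1} f w = n / ρ_n`.
Splitting `f = t g` and applying the Cauchy–Schwarz inequality with weight `g w` yields
`(n / ρ_n)² ≤ (∫ p_n² g w) (2n - 1)`, while `ρ_n² ≤ ∫ (t p_n)² w ≲ a_n²`, hence
`∫ p_n² g w ≳ n / a_n²`. Finally, the equation defining `a_n` gives `n ≍ a_n f(a_n)`.
-/

section Parity

theorem even_of_odd_deriv {𝕜 F : Type*} [RCLike 𝕜] [NormedAddCommGroup F] [NormedSpace 𝕜 F]
    {f : 𝕜 → F} (hf : Differentiable 𝕜 f) (h : (deriv f).Odd) : f.Even := by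
  have hd : ∀ x, HasDerivAt (fun y => f (-y) - f y) 0 x := fun x =>
    (((hf (-x)).hasDerivAt.scomp x (hasDerivAt_neg x)).sub (hf x).hasDerivAt).congr_deriv (by
      rw [h x, neg_smul, one_smul, neg_neg, sub_self])
  intro x
  have := is_const_of_deriv_eq_zero (fun x => (hd x).differentiableAt) (fun x => (hd x).deriv) x 0
  simpa only [neg_zero, sub_self, sub_eq_zero] using this

variable {𝕜 F : Type*} [NontriviallyNormedField 𝕜] [NormedAddCommGroup F] [NormedSpace 𝕜 F]
  {f : 𝕜 → F}

theorem odd_deriv_of_even_s15 (h : f.Even) : (deriv f).Odd := fun x => by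
  have := deriv_comp_neg f x
  rw [show (fun y => f (-y)) = f from funext h] at this
  rw [this, neg_neg]

theorem even_deriv_of_odd (h : f.Odd) : (deriv f).Even := fun x => by
  have := deriv_comp_neg f x
  rw [show (fun y => f (-y)) = -f from funext h, deriv.neg] at this
  exact (neg_injective this).symm

end Parity

section PowerQuotient

variable {f : ℝ → ℝ} {κ : ℝ}

theorem antitoneOn_div_rpow (hf : DifferentiableOn ℝ f (Ioi 0))
    (h : ∀ x, 0 < x → x * deriv f x ≤ κ * f x) :
    AntitoneOn (fun x => f x / x ^ κ) (Ioi 0) := by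
  have hd : ∀ x ∈ Ioi (0 : ℝ), HasDerivAt (fun x => f x / x ^ κ)
      ((deriv f x * x ^ κ - f x * (κ * x ^ (κ - 1))) / (x ^ κ) ^ 2) x := fun x hx =>
    (hf.differentiableAt (Ioi_mem_nhds hx)).hasDerivAt.fun_div
      (hasDerivAt_rpow_const (.inl hx.ne')) (rpow_pos_of_pos hx _).ne'
  refine antitoneOn_of_deriv_nonpos (convex_Ioi 0)
    (fun x hx => (hd x hx).continuousAt.continuousWithinAt) ?_ ?_ <;> rw [interior_Ioi]
  · exact fun x hx => (hd x hx).differentiableAt.differentiableWithinAt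
  · intro x (hx : 0 < x)
    rw [(hd x hx).deriv]
    refine div_nonpos_of_nonpos_of_nonneg ?_ (sq_nonneg _)
    have hpow : x ^ κ = x * x ^ (κ - 1) := by
      rw [mul_comm, ← rpow_add_one hx.ne', sub_add_cancel]
    calc deriv f x * x ^ κ - f x * (κ * x ^ (κ - 1))
        = (x * deriv f x - κ * f x) * x ^ (κ - 1) := by rw [hpow]; ring
      _ ≤ 0 := mul_nonpos_of_nonpos_of_nonneg (sub_nonpos.2 (h x hx)) (rpow_nonneg hx.le _)

theorem monotoneOn_div_rpow (hf : DifferentiableOn ℝ f (Ioi 0))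
    (h : ∀ x, 0 < x → κ * f x ≤ x * deriv f x) :
    MonotoneOn (fun x => f x / x ^ κ) (Ioi 0) := by
  have := (antitoneOn_div_rpow (κ := κ) hf.neg fun x hx => by
    rw [deriv.neg, Pi.neg_apply, mul_neg, mul_neg, neg_le_neg_iff]
    exact h x hx).neg
  exact this.congr fun x _ => by simp only [Pi.neg_apply, neg_div, neg_neg]

end PowerQuotient

/-- An odd function, positive on `(0, ∞)`, for which `f t / t` is nondecreasing in `|t|`. This is
the part of the behaviour of `Q'` that lower bounds for its difference quotients rest on. -/
structure IsOddSuperlinear (f : ℝ → ℝ) : Prop where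
  odd : f.Odd
  pos : ∀ x, 0 < x → 0 < f x
  monotoneOn_div_id : MonotoneOn (fun x => f x / x) (Ioi 0)

namespace IsOddSuperlinear

variable {f : ℝ → ℝ} {s t x : ℝ}

theorem div_id_pos (hf : IsOddSuperlinear f) (hx : 0 < x) : 0 < f x / x :=
  div_pos (hf.pos x hx) hx

theorem abs_div_abs (hf : IsOddSuperlinear f) (x : ℝ) : f |x| / |x| = f x / x := by
  rcases abs_choice x with h | h <;> rw [h]
  rw [hf.odd, neg_div_neg_eq]

theorem div_id_nonneg (hf : IsOddSuperlinear f) (x : ℝ) : 0 ≤ f x / x := by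
  rw [← hf.abs_div_abs]
  rcases (abs_nonneg x).eq_or_lt with h | h
  · rw [← h, div_zero]
  · exact (hf.div_id_pos h).le

theorem mul_div_id (hf : IsOddSuperlinear f) (x : ℝ) : x * (f x / x) = f x :=
  mul_div_cancel_of_imp' fun h => by rw [h, hf.odd.map_zero]

theorem id_mul_eq (hf : IsOddSuperlinear f) (x : ℝ) : x * f x = x ^ 2 * (f x / x) := by
  rw [sq, mul_assoc, hf.mul_div_id]

theorem id_mul_nonneg (hf : IsOddSuperlinear f) (x : ℝ) : 0 ≤ x * f x := by
  rw [hf.id_mul_eq]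
  exact mul_nonneg (sq_nonneg x) (hf.div_id_nonneg x)

theorem div_id_le_div_id (hf : IsOddSuperlinear f) (hst : |s| ≤ |t|) :
    f s / s ≤ f t / t := by
  rcases (abs_nonneg s).eq_or_lt with h | h
  · rw [abs_eq_zero.1 h.symm, div_zero]
    exact hf.div_id_nonneg t
  · rw [← hf.abs_div_abs s, ← hf.abs_div_abs t]
    exact hf.monotoneOn_div_id h (h.trans_le hst) hst

theorem monotoneOn (hf : IsOddSuperlinear f) : MonotoneOn f (Ioi 0) := by
  intro s (hs : 0 < s) t _ hst
  rw [← hf.mul_div_id s, ← hf.mul_div_id t]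
  exact mul_le_mul hst (hf.div_id_le_div_id (abs_le_abs_of_nonneg hs.le hst))
    (hf.div_id_nonneg s) (hs.le.trans hst)

theorem sq_le (hf : IsOddSuperlinear f) (hs : 0 < s) (t : ℝ) :
    t ^ 2 ≤ s ^ 2 + t * f t / (f s / s) := by
  rcases le_total |t| s with h | h
  · have : 0 ≤ t * f t / (f s / s) := div_nonneg (hf.id_mul_nonneg t) (hf.div_id_nonneg s)
    linarith [sq_le_sq' (neg_le_of_abs_le h) (le_of_abs_le h)]
  · have : t ^ 2 ≤ t * f t / (f s / s) := by
      rw [le_div_iff₀ (hf.div_id_pos hs), hf.id_mul_eq]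
      gcongr t ^ 2 * ?_
      exact hf.div_id_le_div_id (by rwa [abs_of_pos hs])
    linarith [sq_nonneg s]

theorem half_add_le_diff_quotient (hf : IsOddSuperlinear f) (h : t ≠ x) :
    (f x / x + f t / t) / 2 ≤ (f t - f x) / (t - x) := by
  have hne : t - x ≠ 0 := sub_ne_zero.2 h
  have hsame : 0 ≤ (t ^ 2 - x ^ 2) * (f t / t - f x / x) := by
    rcases le_total |x| |t| with hxt | hxt
    · exact mul_nonneg (sub_nonneg.2 (sq_le_sq.2 hxt)) (sub_nonneg.2 (hf.div_id_le_div_id hxt))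
    · exact mul_nonneg_of_nonpos_of_nonpos (sub_nonpos.2 (sq_le_sq.2 hxt))
        (sub_nonpos.2 (hf.div_id_le_div_id hxt))
  have hid : (f t - f x) / (t - x) = (f x / x + f t / t) / 2 +
      (t ^ 2 - x ^ 2) * (f t / t - f x / x) / (2 * (t - x) ^ 2) := by
    rw [show f t - f x = t * (f t / t) - x * (f x / x) by rw [hf.mul_div_id, hf.mul_div_id]]
    generalize f t / t = gt, f x / x = gx
    field_simp
    ring
  rw [hid]
  exact le_add_of_nonneg_right (by positivity)

theorem diff_quotient_nonneg (hf : IsOddSuperlinear f) (x t : ℝ) :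
    0 ≤ (f t - f x) / (t - x) := by
  rcases eq_or_ne t x with rfl | h
  · rw [sub_self, sub_self, div_zero]
  · exact (by linarith [hf.div_id_nonneg x, hf.div_id_nonneg t] :
      0 ≤ (f x / x + f t / t) / 2).trans (hf.half_add_le_diff_quotient h)

theorem diff_quotient_le_two_mul (hf : IsOddSuperlinear f) (h : 2 * |x| ≤ |t|) :
    (f t - f x) / (t - x) ≤ 2 * (f t / t) := by
  have hx := hf.div_id_nonneg x
  have ht := hf.div_id_nonneg t
  have hxt : f x / x ≤ f t / t := hf.div_id_le_div_id (by linarith [abs_nonneg x])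
  rcases eq_or_ne t x with rfl | hne
  · rw [sub_self, sub_self, div_zero]
    positivity
  have hquot : x / (t - x) ≤ 1 := by
    refine (le_abs_self _).trans ?_
    rw [abs_div, div_le_one (abs_pos.2 (sub_ne_zero.2 hne))]
    linarith [abs_sub_abs_le_abs_sub t x]
  calc (f t - f x) / (t - x)
      = (t * (f t / t) - x * (f x / x)) / (t - x) := by rw [hf.mul_div_id, hf.mul_div_id]
    _ = f t / t + x / (t - x) * (f t / t - f x / x) := by
        have := sub_ne_zero.2 hne
        generalize f t / t = gt, f x / x = gx
        field_simp
        ring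
    _ ≤ f t / t + 1 * (f t / t - f x / x) := by
        gcongr
    _ ≤ 2 * (f t / t) := by linarith

end IsOddSuperlinear

/-- `f` has the properties that the paper requires of the derivative `Q'` of a Freud exponent:
`f` is odd, positive on `(0, ∞)`, and `1 ≤ x f'(x) / f(x) ≤ κ` there. Since
`(x f(x))' / f(x) = 1 + x f'(x) / f(x)`, this is the paper's condition with `A = 2`, `B = κ + 1`. -/
structure IsFreudDeriv (f : ℝ → ℝ) (κ : ℝ) : Prop where
  odd : f.Odd
  pos : ∀ x, 0 < x → 0 < f x
  differentiable : Differentiable ℝ f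
  le_mul_deriv : ∀ x, 0 < x → f x ≤ x * deriv f x
  mul_deriv_le : ∀ x, 0 < x → x * deriv f x ≤ κ * f x

namespace IsFreudDeriv

variable {f : ℝ → ℝ} {κ s t x K R : ℝ}

theorem isOddSuperlinear (hf : IsFreudDeriv f κ) : IsOddSuperlinear f where
  odd := hf.odd
  pos := hf.pos
  monotoneOn_div_id := by
    simpa only [rpow_one] using monotoneOn_div_rpow (κ := 1) hf.differentiable.differentiableOn
      fun x hx => by simpa only [one_mul] using hf.le_mul_deriv x hx

theorem one_le (hf : IsFreudDeriv f κ) : 1 ≤ κ := by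
  have h := (hf.le_mul_deriv 1 one_pos).trans (hf.mul_deriv_le 1 one_pos)
  exact (le_mul_iff_one_le_left (hf.pos 1 one_pos)).1 h

theorem le_div_rpow_mul (hf : IsFreudDeriv f κ) (hs : 0 < s) (hst : s ≤ t) :
    f t ≤ (t / s) ^ κ * f s := by
  have ht : 0 < t := hs.trans_le hst
  have h := antitoneOn_div_rpow hf.differentiable.differentiableOn hf.mul_deriv_le hs ht hst
  rw [div_le_iff₀ (rpow_pos_of_pos ht κ)] at h
  refine h.trans_eq ?_
  rw [div_rpow ht.le hs.le]
  ring

theorem div_id_le_rpow_mul (hf : IsFreudDeriv f κ) (hs : 0 < s) (hK : 1 ≤ K)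
    (ht : |t| ≤ K * s) : f t / t ≤ K ^ (κ - 1) * (f s / s) := by
  have hK0 : 0 < K := one_pos.trans_le hK
  have hKs : 0 < K * s := mul_pos hK0 hs
  calc f t / t ≤ f (K * s) / (K * s) :=
        hf.isOddSuperlinear.div_id_le_div_id (by rwa [abs_of_pos hKs])
    _ ≤ (K * s / s) ^ κ * f s / (K * s) := by
        gcongr
        exact hf.le_div_rpow_mul hs (le_mul_of_one_le_left hs.le hK)
    _ = K ^ (κ - 1) * (f s / s) := by
        rw [mul_div_cancel_right₀ K hs.ne', rpow_sub_one hK0.ne']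
        field_simp

theorem abs_le_mul_pow (hf : IsFreudDeriv f κ) (t : ℝ) :
    |f t| ≤ f 1 * (1 + t ^ 2) ^ ⌈κ⌉₊ := by
  have hf1 := hf.pos 1 one_pos
  have hK : 1 ≤ 1 + t ^ 2 := le_add_of_nonneg_right (sq_nonneg t)
  have ht : |t| ≤ 1 + t ^ 2 := by
    rw [← sq_abs]
    nlinarith [sq_nonneg (|t| - 1)]
  have h := hf.div_id_le_rpow_mul one_pos hK (ht.trans_eq (mul_one _).symm)
  rw [div_one] at h
  calc |f t| = |t| * (f t / t) := by
        rw [← abs_of_nonneg (hf.isOddSuperlinear.div_id_nonneg t), ← abs_mul,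
          hf.isOddSuperlinear.mul_div_id]
    _ ≤ (1 + t ^ 2) * ((1 + t ^ 2) ^ (κ - 1) * f 1) :=
        mul_le_mul ht h (hf.isOddSuperlinear.div_id_nonneg t) (by positivity)
    _ = f 1 * (1 + t ^ 2) ^ κ := by
        rw [rpow_sub_one (by positivity)]
        field_simp
    _ ≤ f 1 * (1 + t ^ 2) ^ ⌈κ⌉₊ := by
        rw [← rpow_natCast _ ⌈κ⌉₊]
        exact mul_le_mul_of_nonneg_left (rpow_le_rpow_of_exponent_le hK (Nat.le_ceil κ)) hf1.le

theorem deriv_zero_le_div_id (hf : IsFreudDeriv f κ) (hR : 0 < R) : deriv f 0 ≤ f R / R := by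
  refine le_of_tendsto (hasDerivAt_iff_tendsto_slope.1 (hf.differentiable 0).hasDerivAt) ?_
  filter_upwards [nhdsWithin_le_nhds (Metric.ball_mem_nhds 0 hR)] with t ht
  rw [slope_def_field, hf.odd.map_zero, sub_zero, sub_zero]
  rw [mem_ball_zero_iff, norm_eq_abs] at ht
  exact hf.isOddSuperlinear.div_id_le_div_id (ht.le.trans (le_abs_self R))

theorem deriv_le_mul_div_id (hf : IsFreudDeriv f κ) (hR : 0 < R) (h : |x| ≤ R) :
    deriv f x ≤ κ * (f R / R) := by
  rcases eq_or_ne x 0 with rfl | hx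
  · exact (hf.deriv_zero_le_div_id hR).trans
      (le_mul_of_one_le_left (hf.isOddSuperlinear.div_id_nonneg R) hf.one_le)
  · have hx' : 0 < |x| := abs_pos.2 hx
    have heven : deriv f |x| = deriv f x := by
      rcases abs_choice x with h | h <;> rw [h]
      exact even_deriv_of_odd hf.odd x
    calc deriv f x ≤ κ * (f |x| / |x|) := by
          rw [← heven, ← mul_div_assoc, le_div_iff₀' hx']
          exact hf.mul_deriv_le _ hx'
      _ ≤ κ * (f R / R) := by
          gcongr κ * ?_
          · exact zero_le_one.trans hf.one_le
          · exact hf.isOddSuperlinear.monotoneOn_div_id hx' hR h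

theorem diff_quotient_le_mul_div_id (hf : IsFreudDeriv f κ) (hR : 0 < R) (hx : |x| ≤ R)
    (ht : |t| ≤ R) : (f t - f x) / (t - x) ≤ κ * (f R / R) := by
  wlog hxt : x ≤ t generalizing x t
  · rw [← neg_div_neg_eq, neg_sub, neg_sub]
    exact this ht hx (le_of_not_ge hxt)
  have hG : 0 ≤ κ * (f R / R) :=
    mul_nonneg (zero_le_one.trans hf.one_le) (hf.isOddSuperlinear.div_id_nonneg R)
  refine div_le_of_le_mul₀ (sub_nonneg.2 hxt) hG ?_
  refine (convex_Icc (-R) R).image_sub_le_mul_sub_of_deriv_le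
    hf.differentiable.continuous.continuousOn hf.differentiable.differentiableOn
    (fun y hy => ?_) x (abs_le.1 hx) t (abs_le.1 ht) hxt
  exact hf.deriv_le_mul_div_id hR (abs_le.2 (mem_Icc.1 (interior_subset hy)))

theorem diff_quotient_le (hf : IsFreudDeriv f κ) (hR : 0 < R) (hx : 2 * |x| ≤ R) (t : ℝ) :
    (f t - f x) / (t - x) ≤ κ * (f R / R) + 2 / R ^ 2 * (t * f t) := by
  have hnear : 0 ≤ κ * (f R / R) :=
    mul_nonneg (zero_le_one.trans hf.one_le) (hf.isOddSuperlinear.div_id_nonneg R)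
  have hfar : 0 ≤ 2 / R ^ 2 * (t * f t) :=
    mul_nonneg (by positivity) (hf.isOddSuperlinear.id_mul_nonneg t)
  rcases le_or_gt |t| R with ht | ht
  · have := hf.diff_quotient_le_mul_div_id (x := x) hR (by linarith [abs_nonneg x]) ht
    linarith
  · have hRt : R ^ 2 ≤ t ^ 2 := sq_le_sq.2 (by rw [abs_of_pos hR]; exact ht.le)
    have : (f t - f x) / (t - x) ≤ 2 / R ^ 2 * (t * f t) :=
      calc (f t - f x) / (t - x) ≤ 2 * (f t / t) :=
            hf.isOddSuperlinear.diff_quotient_le_two_mul (hx.trans ht.le)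
        _ = 2 / R ^ 2 * (R ^ 2 * (f t / t)) := by field_simp
        _ ≤ 2 / R ^ 2 * (t ^ 2 * (f t / t)) := by
            gcongr
            exact hf.isOddSuperlinear.div_id_nonneg t
        _ = 2 / R ^ 2 * (t * f t) := by rw [hf.isOddSuperlinear.id_mul_eq]
    linarith

end IsFreudDeriv

section ArcsineWeight

theorem integrableOn_inv_sqrt_one_sub_sq :
    IntegrableOn (fun t : ℝ => (√(1 - t ^ 2))⁻¹) (Ioc 0 1) :=
  intervalIntegral.integrableOn_deriv_of_nonneg (g := arcsin) continuous_arcsin.continuousOn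
    (fun x hx => by
      simpa only [one_div] using hasDerivAt_arcsin (by linarith [hx.1]) hx.2.ne)
    fun x _ => by positivity

theorem integral_inv_sqrt_one_sub_sq : ∫ t in (0 : ℝ)..1, (√(1 - t ^ 2))⁻¹ = π / 2 := by
  rw [intervalIntegral.integral_eq_sub_of_hasDerivAt_of_le (f := arcsin) zero_le_one
    continuous_arcsin.continuousOn (fun x hx => by
      simpa only [one_div] using hasDerivAt_arcsin (by linarith [hx.1]) hx.2.ne)
    ((intervalIntegrable_iff_integrableOn_Ioc_of_le zero_le_one).2
      integrableOn_inv_sqrt_one_sub_sq), arcsin_one, arcsin_zero, sub_zero]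

end ArcsineWeight

/-- The integral `(2 / π) ∫₀¹ a t f(a t) / √(1 - t²) dt` with `f = Q'`: the
Mhaskar–Rahmanov–Saff number `a_u` is the positive solution of `u = mrsIntegral Q' a`. -/
noncomputable def mrsIntegral (f : ℝ → ℝ) (a : ℝ) : ℝ :=
  2 / π * ∫ t in Ioo (0 : ℝ) 1, a * t * f (a * t) / √(1 - t ^ 2)

namespace IsFreudDeriv

variable {f : ℝ → ℝ} {κ a : ℝ}

theorem mrs_integrand_le (hf : IsFreudDeriv f κ) (ha : 0 < a) {t : ℝ} (ht : t ∈ Ioo (0 : ℝ) 1) :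
    a * t * f (a * t) / √(1 - t ^ 2) ≤ a * f a * (√(1 - t ^ 2))⁻¹ := by
  have hat : 0 < a * t := mul_pos ha ht.1
  have hle : a * t ≤ a := mul_le_of_le_one_right ha.le ht.2.le
  rw [div_eq_mul_inv]
  gcongr
  · exact (hf.pos _ hat).le
  · exact hf.isOddSuperlinear.monotoneOn hat ha hle

theorem le_mrs_integrand (hf : IsFreudDeriv f κ) (ha : 0 < a) {t : ℝ} (ht : t ∈ Ioo (0 : ℝ) 1) :
    a * f a * t ^ (κ + 1) ≤ a * t * f (a * t) / √(1 - t ^ 2) := by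
  obtain ⟨ht0, ht1⟩ := ht
  have hat : 0 < a * t := mul_pos ha ht0
  have hpos := hf.pos _ hat
  have hfa : f a * t ^ κ ≤ f (a * t) := by
    have h := hf.le_div_rpow_mul hat (mul_le_of_le_one_right ha.le ht1.le)
    rwa [div_mul_cancel_left₀ ha.ne', inv_rpow ht0.le, inv_mul_eq_div,
      le_div_iff₀ (rpow_pos_of_pos ht0 κ)] at h
  have hsqrt : 0 < √(1 - t ^ 2) := sqrt_pos.2 (by nlinarith)
  calc a * f a * t ^ (κ + 1) = a * t * (f a * t ^ κ) := by
        rw [rpow_add_one ht0.ne']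
        ring
    _ ≤ a * t * f (a * t) := by gcongr
    _ ≤ a * t * f (a * t) / √(1 - t ^ 2) :=
        le_div_self (by positivity) hsqrt (sqrt_le_one.2 (by linarith [sq_nonneg t]))

theorem integrableOn_mrs_integrand (hf : IsFreudDeriv f κ) (ha : 0 < a) :
    IntegrableOn (fun t => a * t * f (a * t) / √(1 - t ^ 2)) (Ioo 0 1) := by
  have hcont := hf.differentiable.continuous
  refine ((integrableOn_inv_sqrt_one_sub_sq.mono_set Ioo_subset_Ioc_self).const_mul
    (a * f a)).mono' (Measurable.aestronglyMeasurable (by fun_prop)) ?_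
  refine (ae_restrict_iff' measurableSet_Ioo).2 (ae_of_all _ fun t ht => ?_)
  have hat := hf.pos _ (mul_pos ha ht.1)
  have ht0 := ht.1
  rw [norm_of_nonneg (by positivity)]
  exact hf.mrs_integrand_le ha ht

theorem mrsIntegral_le (hf : IsFreudDeriv f κ) (ha : 0 < a) : mrsIntegral f a ≤ a * f a := by
  have h : ∫ t in Ioo (0 : ℝ) 1, a * t * f (a * t) / √(1 - t ^ 2) ≤ a * f a * (π / 2) := by
    rw [← integral_inv_sqrt_one_sub_sq, intervalIntegral.integral_of_le zero_le_one,
      integral_Ioc_eq_integral_Ioo, ← integral_const_mul]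
    exact setIntegral_mono_on (hf.integrableOn_mrs_integrand ha)
      ((integrableOn_inv_sqrt_one_sub_sq.mono_set Ioo_subset_Ioc_self).const_mul _)
      measurableSet_Ioo fun t ht => hf.mrs_integrand_le ha ht
  calc mrsIntegral f a ≤ 2 / π * (a * f a * (π / 2)) := by
        rw [mrsIntegral]
        gcongr
    _ = a * f a := by field_simp

theorem mul_le_mrsIntegral (hf : IsFreudDeriv f κ) (ha : 0 < a) :
    a * f a ≤ π / 2 * (κ + 2) * mrsIntegral f a := by
  have hκ := hf.one_le
  have hint : IntegrableOn (fun t : ℝ => a * f a * t ^ (κ + 1)) (Ioo 0 1) :=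
    (((continuous_rpow_const (by linarith)).const_mul _).integrableOn_Icc).mono_set
      Ioo_subset_Icc_self
  have h : a * f a / (κ + 2) ≤ ∫ t in Ioo (0 : ℝ) 1, a * t * f (a * t) / √(1 - t ^ 2) :=
    calc a * f a / (κ + 2) = ∫ t in Ioo (0 : ℝ) 1, a * f a * t ^ (κ + 1) := by
          rw [integral_const_mul, ← integral_Ioc_eq_integral_Ioo,
            ← intervalIntegral.integral_of_le zero_le_one, integral_rpow (.inl (by linarith)),
            one_rpow, zero_rpow (by linarith), sub_zero, mul_one_div, add_assoc, one_add_one_eq_two]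
      _ ≤ ∫ t in Ioo (0 : ℝ) 1, a * t * f (a * t) / √(1 - t ^ 2) :=
          setIntegral_mono_on hint (hf.integrableOn_mrs_integrand ha) measurableSet_Ioo
            fun t ht => hf.le_mrs_integrand ha ht
  rw [div_le_iff₀' (by linarith)] at h
  refine h.trans_eq ?_
  rw [mrsIntegral]
  field_simp

end IsFreudDeriv

theorem sq_integral_mul_mul_le {α : Type*} [MeasurableSpace α] {μ : Measure α} {u v w : α → ℝ}
    (hw : ∀ x, 0 ≤ w x) (huu : Integrable (fun x => u x ^ 2 * w x) μ)
    (huv : Integrable (fun x => u x * v x * w x) μ)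
    (hvv : Integrable (fun x => v x ^ 2 * w x) μ) :
    (∫ x, u x * v x * w x ∂μ) ^ 2 ≤ (∫ x, u x ^ 2 * w x ∂μ) * ∫ x, v x ^ 2 * w x ∂μ := by
  have hquad : ∀ s : ℝ, 0 ≤ (∫ x, u x ^ 2 * w x ∂μ) * (s * s) +
      (2 * ∫ x, u x * v x * w x ∂μ) * s + ∫ x, v x ^ 2 * w x ∂μ := fun s =>
    calc 0 ≤ ∫ x, (s * u x + v x) ^ 2 * w x ∂μ :=
          integral_nonneg fun x => mul_nonneg (sq_nonneg _) (hw x)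
      _ = ∫ x, s * s * (u x ^ 2 * w x) + 2 * s * (u x * v x * w x) + v x ^ 2 * w x ∂μ :=
          integral_congr_ae (ae_of_all _ fun x => by ring)
      _ = _ := by
          rw [integral_add (f := fun x => s * s * (u x ^ 2 * w x) + 2 * s * (u x * v x * w x))
            ((huu.const_mul _).add (huv.const_mul _)) hvv,
            integral_add (huu.const_mul _) (huv.const_mul _), integral_const_mul,
            integral_const_mul]
          ring
  have := discrim_le_zero hquad
  rw [discrim] at this
  linarith

open scoped Polynomial

/-- All moments of the weight `w` are finite. -/
structure HasMoments (w : ℝ → ℝ) : Prop where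
  integrable : ∀ p : ℝ[X], Integrable fun t => p.eval t * w t

theorem HasMoments.sq {w : ℝ → ℝ} (hw : HasMoments w) (p : ℝ[X]) :
    Integrable fun t => p.eval t ^ 2 * w t := by
  have h := hw.integrable (p ^ 2)
  simpa only [Polynomial.eval_pow] using h

theorem HasMoments.of_abs_le {v w : ℝ → ℝ} (hw : HasMoments w) (hv : Measurable v) (q : ℝ[X])
    (h : ∀ t, |v t| ≤ q.eval t * w t) : HasMoments v := by
  refine ⟨fun p => (hw.integrable (p * q)).mono (by fun_prop) (ae_of_all _ fun t => ?_)⟩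
  calc ‖p.eval t * v t‖ = |p.eval t| * |v t| := by rw [norm_eq_abs, abs_mul]
    _ ≤ |p.eval t| * |q.eval t * w t| :=
        mul_le_mul_of_nonneg_left ((h t).trans (le_abs_self _)) (abs_nonneg _)
    _ = ‖(p * q).eval t * w t‖ := by rw [norm_eq_abs, Polynomial.eval_mul, mul_assoc, ← abs_mul]

theorem integral_eval_mul_deriv {w : ℝ → ℝ} (hw : Differentiable ℝ w) (hmom : HasMoments w)
    (hmom' : HasMoments (deriv w)) (p : ℝ[X]) :
    ∫ t, p.eval t * deriv w t = -∫ t, p.derivative.eval t * w t :=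
  integral_mul_deriv_eq_deriv_mul_of_integrable (fun t _ => p.hasDerivAt t)
    (fun t _ => (hw t).hasDerivAt) (hmom'.integrable p) (hmom.integrable p.derivative)
    (hmom.integrable p)

/-- `P n` is the `n`-th orthonormal polynomial of the weight `w`, with positive leading
coefficient. -/
structure IsOrthonormalFamily (w : ℝ → ℝ) (P : ℕ → ℝ[X]) : Prop where
  natDegree_eq : ∀ n, (P n).natDegree = n
  leadingCoeff_pos : ∀ n, 0 < (P n).leadingCoeff
  integral_mul_eq_zero : ∀ (n : ℕ) (q : ℝ[X]), q.degree < n →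
    ∫ t, (P n).eval t * q.eval t * w t = 0
  integral_sq : ∀ n, ∫ t, (P n).eval t ^ 2 * w t = 1

/-- The recurrence coefficient `γ_n / γ_{n+1}`, which is `ρ_{n+1}` in the paper's indexing. -/
noncomputable def recurrenceCoeff (P : ℕ → ℝ[X]) (n : ℕ) : ℝ :=
  (P n).leadingCoeff / (P (n + 1)).leadingCoeff

namespace IsOrthonormalFamily

variable {w : ℝ → ℝ} {P : ℕ → ℝ[X]}

theorem coeff_self (hP : IsOrthonormalFamily w P) (n : ℕ) :
    (P n).coeff n = (P n).leadingCoeff := by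
  rw [Polynomial.leadingCoeff, hP.natDegree_eq]

theorem recurrenceCoeff_pos (hP : IsOrthonormalFamily w P) (n : ℕ) : 0 < recurrenceCoeff P n :=
  div_pos (hP.leadingCoeff_pos n) (hP.leadingCoeff_pos (n + 1))

theorem integral_mul (hP : IsOrthonormalFamily w P) (hw : HasMoments w) {n : ℕ} {q : ℝ[X]}
    (hq : q.natDegree ≤ n) :
    ∫ t, (P n).eval t * q.eval t * w t = q.coeff n / (P n).leadingCoeff := by
  set r := q.coeff n / (P n).leadingCoeff with hr
  have hdeg : (q - Polynomial.C r * P n).degree < n := by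
    refine (Polynomial.degree_lt_iff_coeff_zero _ _).2 fun m hm => ?_
    rw [Polynomial.coeff_sub, Polynomial.coeff_C_mul]
    rcases hm.eq_or_lt with rfl | h
    · rw [hP.coeff_self, hr, div_mul_cancel₀ _ (hP.leadingCoeff_pos n).ne', sub_self]
    · rw [Polynomial.coeff_eq_zero_of_natDegree_lt (hq.trans_lt h),
        Polynomial.coeff_eq_zero_of_natDegree_lt ((hP.natDegree_eq n).trans_lt h), mul_zero,
        sub_zero]
  have hint : Integrable fun t => (P n).eval t * q.eval t * w t := by
    simpa only [Polynomial.eval_mul] using hw.integrable (P n * q)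
  have hsub : (∫ t, (P n).eval t * q.eval t * w t) - r * ∫ t, (P n).eval t ^ 2 * w t = 0 := by
    rw [← hP.integral_mul_eq_zero n _ hdeg, ← integral_const_mul,
      ← integral_sub hint ((hw.sq (P n)).const_mul r)]
    refine integral_congr_ae (ae_of_all _ fun t => ?_)
    simp only [Polynomial.eval_sub, Polynomial.eval_mul, Polynomial.eval_C]
    ring
  rwa [hP.integral_sq, mul_one, sub_eq_zero] at hsub

theorem integral_mul_X_mul_derivative (hP : IsOrthonormalFamily w P) (hw : HasMoments w)
    (n : ℕ) : ∫ t, (P n).eval t * (Polynomial.X * (P n).derivative).eval t * w t = n := by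
  have hcoeff : ∀ m, (Polynomial.X * (P n).derivative).coeff m = (P n).coeff m * m := by
    rintro (_ | m)
    · rw [Polynomial.coeff_X_mul_zero, Nat.cast_zero, mul_zero]
    · rw [Polynomial.coeff_X_mul, Polynomial.coeff_derivative, Nat.cast_succ]
  have hdeg : (Polynomial.X * (P n).derivative).natDegree ≤ n := by
    refine Polynomial.natDegree_le_iff_coeff_eq_zero.2 fun m hm => ?_
    rw [hcoeff, Polynomial.coeff_eq_zero_of_natDegree_lt ((hP.natDegree_eq n).trans_lt hm),
      zero_mul]
  rw [hP.integral_mul hw hdeg, hcoeff, hP.coeff_self,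
    mul_div_cancel_left₀ _ (hP.leadingCoeff_pos n).ne']

theorem integral_X_mul_sq_mul_deriv (hP : IsOrthonormalFamily w P) (hw : Differentiable ℝ w)
    (hmom : HasMoments w) (hmom' : HasMoments (deriv w)) (n : ℕ) :
    ∫ t, t * (P n).eval t ^ 2 * deriv w t = -(2 * n + 1) := by
  have hint := hmom.integrable (P n * (Polynomial.X * (P n).derivative))
  simp only [Polynomial.eval_mul (p := P n)] at hint
  have hparts := integral_eval_mul_deriv hw hmom hmom' (Polynomial.X * P n ^ 2)
  simp only [Polynomial.eval_mul, Polynomial.eval_X, Polynomial.eval_pow] at hparts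
  rw [hparts, ← hP.integral_mul_X_mul_derivative hmom n, ← hP.integral_sq n,
    ← integral_const_mul, ← integral_add (hint.const_mul 2) (hmom.sq (P n))]
  refine congrArg Neg.neg (integral_congr_ae (ae_of_all _ fun t => ?_))
  simp only [Polynomial.derivative_mul, Polynomial.derivative_X, Polynomial.derivative_sq,
    Polynomial.eval_add, Polynomial.eval_mul, Polynomial.eval_pow, Polynomial.eval_X,
    Polynomial.eval_one, Polynomial.eval_C]
  ring

theorem integral_mul_succ_mul_deriv (hP : IsOrthonormalFamily w P) (hw : Differentiable ℝ w)
    (hmom : HasMoments w) (hmom' : HasMoments (deriv w)) (n : ℕ) :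
    ∫ t, (P (n + 1)).eval t * (P n).eval t * deriv w t = -((n + 1) / recurrenceCoeff P n) := by
  have hdeg : (P (n + 1)).derivative.natDegree ≤ n :=
    (Polynomial.natDegree_derivative_le _).trans (by rw [hP.natDegree_eq, Nat.add_sub_cancel])
  have hdeg' : (P n).derivative.degree < (n + 1 : ℕ) :=
    (Polynomial.degree_derivative_le.trans Polynomial.degree_le_natDegree).trans_lt (by
      rw [hP.natDegree_eq]
      exact_mod_cast n.lt_succ_self)
  have hlead : ∫ t, (P n).eval t * (P (n + 1)).derivative.eval t * w t =
      (n + 1) / recurrenceCoeff P n := by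
    rw [hP.integral_mul hmom hdeg, Polynomial.coeff_derivative, hP.coeff_self, recurrenceCoeff,
      div_div_eq_mul_div, mul_comm]
  have hint : Integrable fun t => (P n).eval t * (P (n + 1)).derivative.eval t * w t := by
    simpa only [Polynomial.eval_mul] using hmom.integrable (P n * (P (n + 1)).derivative)
  have hint' : Integrable fun t => (P (n + 1)).eval t * (P n).derivative.eval t * w t := by
    simpa only [Polynomial.eval_mul] using hmom.integrable (P (n + 1) * (P n).derivative)
  have hparts := integral_eval_mul_deriv hw hmom hmom' (P (n + 1) * P n)
  simp only [Polynomial.eval_mul] at hparts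
  rw [hparts, ← hlead, ← add_zero (∫ t, (P n).eval t * _ * w t),
    ← hP.integral_mul_eq_zero (n + 1) _ hdeg', ← integral_add hint hint']
  refine congrArg Neg.neg (integral_congr_ae (ae_of_all _ fun t => ?_))
  simp only [Polynomial.derivative_mul, Polynomial.eval_add, Polynomial.eval_mul]
  ring

theorem integral_X_mul_mul_succ (hP : IsOrthonormalFamily w P) (hw : HasMoments w) (n : ℕ) :
    ∫ t, t * (P (n + 1)).eval t * (P n).eval t * w t = recurrenceCoeff P n := by
  have hdeg : (Polynomial.X * P n).natDegree ≤ n + 1 := by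
    refine Polynomial.natDegree_mul_le.trans ?_
    rw [hP.natDegree_eq, Polynomial.natDegree_X, add_comm]
  have h := hP.integral_mul hw hdeg
  rw [Polynomial.coeff_X_mul, hP.coeff_self] at h
  rw [recurrenceCoeff, ← h]
  refine integral_congr_ae (ae_of_all _ fun t => ?_)
  simp only [Polynomial.eval_mul, Polynomial.eval_X]
  ring

theorem sq_recurrenceCoeff_le (hP : IsOrthonormalFamily w P) (hw : HasMoments w)
    (hw0 : ∀ t, 0 ≤ w t) (n : ℕ) :
    recurrenceCoeff P n ^ 2 ≤ ∫ t, (t * (P (n + 1)).eval t) ^ 2 * w t := by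
  have hsq := hw.sq (Polynomial.X * P (n + 1))
  have hmul := hw.integrable (Polynomial.X * P (n + 1) * P n)
  simp only [Polynomial.eval_mul, Polynomial.eval_X] at hsq hmul
  have h := sq_integral_mul_mul_le hw0 hsq hmul (hw.sq (P n))
  rwa [hP.integral_X_mul_mul_succ hw, hP.integral_sq, mul_one] at h

end IsOrthonormalFamily

theorem hasMoments_exp_neg_mul_sq {b : ℝ} (hb : 0 < b) :
    HasMoments fun t => exp (-b * t ^ 2) := by
  refine ⟨fun p => ?_⟩
  induction p using Polynomial.induction_on' with
  | add p q hp hq =>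
    simp only [Polynomial.eval_add, add_mul]
    exact hp.add hq
  | monomial n a =>
    have h := (integrable_rpow_mul_exp_neg_mul_sq hb (s := n)
      (neg_one_lt_zero.trans_le n.cast_nonneg)).const_mul a
    simpa only [Polynomial.eval_monomial, rpow_natCast, mul_assoc] using h

/-- The weight `w = e^{-Q}`. -/
noncomputable def freudWeight (Q : ℝ → ℝ) (t : ℝ) : ℝ :=
  exp (-(Q t))

theorem freudWeight_nonneg (Q : ℝ → ℝ) (t : ℝ) : 0 ≤ freudWeight Q t :=
  (exp_pos _).le

theorem hasMoments_freudWeight {Q : ℝ → ℝ} {b c : ℝ} (hQ : Measurable Q) (hb : 0 < b)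
    (h : ∀ t, c + b * t ^ 2 ≤ Q t) : HasMoments (freudWeight Q) := by
  refine (hasMoments_exp_neg_mul_sq hb).of_abs_le hQ.neg.exp (Polynomial.C (exp (-c)))
    fun t => ?_
  rw [abs_of_nonneg (freudWeight_nonneg Q t), Polynomial.eval_C, ← exp_add]
  exact exp_le_exp.2 (by linarith [h t])

theorem hasDerivAt_freudWeight {Q : ℝ → ℝ} {t : ℝ} (hQ : DifferentiableAt ℝ Q t) :
    HasDerivAt (freudWeight Q) (-(deriv Q t * freudWeight Q t)) t :=
  hQ.hasDerivAt.neg.exp.congr_deriv (by rw [freudWeight, mul_neg, mul_comm]; rfl)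

/-- `Q` is a Freud exponent: `e^{-Q}` is a Freud weight with `A = 2` and `B = κ + 1`. That `Q` is
even is encoded by `Q'` being odd. -/
structure IsFreudExponent (Q : ℝ → ℝ) (κ : ℝ) : Prop where
  differentiable : Differentiable ℝ Q
  isFreudDeriv : IsFreudDeriv (deriv Q) κ

/-- The integral `∫ p(t)² w(t) (Q'(t) - Q'(x)) / (t - x) dt` for `w = e^{-Q}`, which is
`A_n(x) / ρ_n` when `p = p_n`. -/
noncomputable def ladderIntegral (Q : ℝ → ℝ) (p : ℝ[X]) (x : ℝ) : ℝ :=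
  ∫ t, p.eval t ^ 2 * freudWeight Q t * ((deriv Q t - deriv Q x) / (t - x))

namespace IsFreudExponent

variable {Q : ℝ → ℝ} {κ R : ℝ}

theorem isOddSuperlinear (hQ : IsFreudExponent Q κ) : IsOddSuperlinear (deriv Q) :=
  hQ.isFreudDeriv.isOddSuperlinear

theorem quadratic_le (hQ : IsFreudExponent Q κ) (t : ℝ) :
    Q 0 - deriv Q 1 + deriv Q 1 / 4 * t ^ 2 ≤ Q t := by
  wlog ht : 0 ≤ t generalizing t
  · simpa only [neg_sq, even_of_odd_deriv hQ.differentiable hQ.isOddSuperlinear.odd t] using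
      this (-t) (neg_nonneg.2 (le_of_not_ge ht))
  have hq1 := hQ.isOddSuperlinear.pos 1 one_pos
  have hd : ∀ s, HasDerivAt (fun s => Q s - deriv Q 1 / 2 * (s - 1) ^ 2)
      (deriv Q s - deriv Q 1 * (s - 1)) s := fun s =>
    ((hQ.differentiable s).hasDerivAt.sub
      ((((hasDerivAt_id s).sub_const 1).pow 2).const_mul _)).congr_deriv (by
        simp only [id_eq]; ring)
  have hmono : MonotoneOn (fun s => Q s - deriv Q 1 / 2 * (s - 1) ^ 2) (Ici 0) := by
    refine monotoneOn_of_deriv_nonneg (convex_Ici 0)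
      (fun s _ => (hd s).continuousAt.continuousWithinAt)
      (fun s _ => (hd s).differentiableAt.differentiableWithinAt) fun s hs => ?_
    rw [interior_Ici, mem_Ioi] at hs
    rw [(hd s).deriv, sub_nonneg]
    rcases le_total s 1 with h | h
    · nlinarith [hQ.isOddSuperlinear.pos s hs]
    · have := hQ.isOddSuperlinear.monotoneOn_div_id (mem_Ioi.2 one_pos) hs h
      simp only [div_one, le_div_iff₀ hs] at this
      linarith
  have := hmono self_mem_Ici ht ht
  nlinarith [sq_nonneg (t - 2)]

theorem hasMoments (hQ : IsFreudExponent Q κ) : HasMoments (freudWeight Q) :=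
  hasMoments_freudWeight hQ.differentiable.continuous.measurable
    (div_pos (hQ.isOddSuperlinear.pos 1 one_pos) four_pos) hQ.quadratic_le

theorem differentiable_freudWeight (hQ : IsFreudExponent Q κ) :
    Differentiable ℝ (freudWeight Q) :=
  fun t => (hasDerivAt_freudWeight (hQ.differentiable t)).differentiableAt

theorem deriv_freudWeight (hQ : IsFreudExponent Q κ) (t : ℝ) :
    deriv (freudWeight Q) t = -(deriv Q t * freudWeight Q t) :=
  (hasDerivAt_freudWeight (hQ.differentiable t)).deriv

theorem hasMoments_deriv (hQ : IsFreudExponent Q κ) : HasMoments (deriv (freudWeight Q)) := by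
  refine hQ.hasMoments.of_abs_le (measurable_deriv _)
    (Polynomial.C (deriv Q 1) * (1 + Polynomial.X ^ 2) ^ ⌈κ⌉₊) fun t => ?_
  rw [hQ.deriv_freudWeight, abs_neg, abs_mul, abs_of_nonneg (freudWeight_nonneg Q t)]
  refine mul_le_mul_of_nonneg_right ?_ (freudWeight_nonneg Q t)
  simpa only [Polynomial.eval_mul, Polynomial.eval_C, Polynomial.eval_pow, Polynomial.eval_add,
    Polynomial.eval_one, Polynomial.eval_X] using hQ.isFreudDeriv.abs_le_mul_pow t

theorem integrable_mul_deriv (hQ : IsFreudExponent Q κ) (p : ℝ[X]) :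
    Integrable fun t => p.eval t * (deriv Q t * freudWeight Q t) := by
  have h := (hQ.hasMoments_deriv.integrable p).neg
  refine h.congr (ae_of_all _ fun t => ?_)
  rw [Pi.neg_apply, hQ.deriv_freudWeight, mul_neg, neg_neg]

theorem integrable_sq_mul_id_mul_deriv (hQ : IsFreudExponent Q κ) (p : ℝ[X]) :
    Integrable fun t => p.eval t ^ 2 * freudWeight Q t * (t * deriv Q t) := by
  refine (hQ.integrable_mul_deriv (Polynomial.X * p ^ 2)).congr (ae_of_all _ fun t => ?_)
  simp only [Polynomial.eval_mul, Polynomial.eval_X, Polynomial.eval_pow]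
  ring

theorem ladder_integrand_le (hQ : IsFreudExponent Q κ) (p : ℝ[X]) {x : ℝ} (hR : 0 < R)
    (hx : 2 * |x| ≤ R) (t : ℝ) :
    p.eval t ^ 2 * freudWeight Q t * ((deriv Q t - deriv Q x) / (t - x)) ≤
      κ * (deriv Q R / R) * (p.eval t ^ 2 * freudWeight Q t) +
        2 / R ^ 2 * (p.eval t ^ 2 * freudWeight Q t * (t * deriv Q t)) := by
  have h := mul_le_mul_of_nonneg_left (hQ.isFreudDeriv.diff_quotient_le hR hx t)
    (mul_nonneg (sq_nonneg (p.eval t)) (freudWeight_nonneg Q t))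
  linarith

theorem integrable_ladder_integrand (hQ : IsFreudExponent Q κ) (p : ℝ[X]) (x : ℝ) :
    Integrable fun t => p.eval t ^ 2 * freudWeight Q t * ((deriv Q t - deriv Q x) / (t - x)) := by
  set R := 2 * |x| + 1
  have hR : 0 < R := by positivity
  have hw := hQ.differentiable_freudWeight.continuous
  refine (((hQ.hasMoments.sq p).const_mul (κ * (deriv Q R / R))).add
    ((hQ.integrable_sq_mul_id_mul_deriv p).const_mul (2 / R ^ 2))).mono'
    (Measurable.aestronglyMeasurable (by fun_prop)) (ae_of_all _ fun t => ?_)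
  rw [norm_of_nonneg (mul_nonneg (mul_nonneg (sq_nonneg _) (freudWeight_nonneg Q t))
    (hQ.isOddSuperlinear.diff_quotient_nonneg x t))]
  exact hQ.ladder_integrand_le p hR (le_add_of_nonneg_right zero_le_one) t

theorem ladderIntegral_le (hQ : IsFreudExponent Q κ) (p : ℝ[X]) {x : ℝ} (hR : 0 < R)
    (hx : 2 * |x| ≤ R) :
    ladderIntegral Q p x ≤ κ * (deriv Q R / R) * (∫ t, p.eval t ^ 2 * freudWeight Q t) +
      2 / R ^ 2 * ∫ t, p.eval t ^ 2 * freudWeight Q t * (t * deriv Q t) := by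
  have hnear := (hQ.hasMoments.sq p).const_mul (κ * (deriv Q R / R))
  have hfar := (hQ.integrable_sq_mul_id_mul_deriv p).const_mul (2 / R ^ 2)
  rw [← integral_const_mul, ← integral_const_mul, ← integral_add hnear hfar]
  exact integral_mono (hQ.integrable_ladder_integrand p x) (hnear.add hfar)
    (hQ.ladder_integrand_le p hR hx)

theorem ladderIntegral_nonneg (hQ : IsFreudExponent Q κ) (p : ℝ[X]) (x : ℝ) :
    0 ≤ ladderIntegral Q p x :=
  integral_nonneg fun t => mul_nonneg (mul_nonneg (sq_nonneg _) (freudWeight_nonneg Q t))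
    (hQ.isOddSuperlinear.diff_quotient_nonneg x t)

theorem integrable_sq_mul_deriv_div_id (hQ : IsFreudExponent Q κ) (p : ℝ[X]) :
    Integrable fun t => p.eval t ^ 2 * freudWeight Q t * (deriv Q t / t) := by
  simpa only [hQ.isOddSuperlinear.odd.map_zero, sub_zero] using hQ.integrable_ladder_integrand p 0

theorem ladderIntegral_zero (hQ : IsFreudExponent Q κ) (p : ℝ[X]) :
    ladderIntegral Q p 0 = ∫ t, p.eval t ^ 2 * freudWeight Q t * (deriv Q t / t) := by
  simp only [ladderIntegral, hQ.isOddSuperlinear.odd.map_zero, sub_zero]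

theorem half_add_le_ladderIntegral (hQ : IsFreudExponent Q κ) (p : ℝ[X]) (x : ℝ) :
    (deriv Q x / x * (∫ t, p.eval t ^ 2 * freudWeight Q t) + ladderIntegral Q p 0) / 2 ≤
      ladderIntegral Q p x := by
  have hsq := (hQ.hasMoments.sq p).const_mul (deriv Q x / x)
  have hzero := hQ.integrable_sq_mul_deriv_div_id p
  rw [hQ.ladderIntegral_zero, ← integral_const_mul, ← integral_add hsq hzero, ← integral_div]
  refine integral_mono_ae ((hsq.add hzero).div_const 2) (hQ.integrable_ladder_integrand p x) ?_
  filter_upwards [Measure.ae_ne volume x] with t ht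
  have h := mul_le_mul_of_nonneg_left (hQ.isOddSuperlinear.half_add_le_diff_quotient ht)
    (mul_nonneg (sq_nonneg (p.eval t)) (freudWeight_nonneg Q t))
  linarith

theorem sq_integral_mul_mul_deriv_le (hQ : IsFreudExponent Q κ) (p q : ℝ[X]) :
    (∫ t, p.eval t * q.eval t * (deriv Q t * freudWeight Q t)) ^ 2 ≤
      ladderIntegral Q p 0 * ∫ t, q.eval t ^ 2 * freudWeight Q t * (t * deriv Q t) := by
  have hpp : ∀ t, p.eval t ^ 2 * freudWeight Q t * (deriv Q t / t) =
      p.eval t ^ 2 * (deriv Q t / t * freudWeight Q t) := fun t => by ring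
  have hpq : ∀ t, p.eval t * q.eval t * (deriv Q t * freudWeight Q t) =
      p.eval t * (t * q.eval t) * (deriv Q t / t * freudWeight Q t) := fun t => by
    conv_lhs => rw [← hQ.isOddSuperlinear.mul_div_id t]
    ring
  have hqq : ∀ t, q.eval t ^ 2 * freudWeight Q t * (t * deriv Q t) =
      (t * q.eval t) ^ 2 * (deriv Q t / t * freudWeight Q t) := fun t => by
    rw [hQ.isOddSuperlinear.id_mul_eq]
    ring
  have hp := hQ.integrable_sq_mul_deriv_div_id p
  have hq := hQ.integrable_sq_mul_id_mul_deriv q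
  have h := hQ.integrable_mul_deriv (p * q)
  simp only [Polynomial.eval_mul] at h
  rw [hQ.ladderIntegral_zero]
  simp only [hpp, hpq, hqq] at hp hq h ⊢
  exact sq_integral_mul_mul_le
    (fun t => mul_nonneg (hQ.isOddSuperlinear.div_id_nonneg t) (freudWeight_nonneg Q t)) hp h hq

variable {P : ℕ → ℝ[X]} {α s x K L : ℝ} {n : ℕ}

theorem integral_sq_mul_id_mul_deriv (hQ : IsFreudExponent Q κ)
    (hP : IsOrthonormalFamily (freudWeight Q) P) (n : ℕ) :
    ∫ t, (P n).eval t ^ 2 * freudWeight Q t * (t * deriv Q t) = 2 * n + 1 := by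
  rw [← neg_eq_iff_eq_neg.2 (hP.integral_X_mul_sq_mul_deriv hQ.differentiable_freudWeight
    hQ.hasMoments hQ.hasMoments_deriv n), ← integral_neg]
  refine integral_congr_ae (ae_of_all _ fun t => ?_)
  simp only [hQ.deriv_freudWeight]
  ring

theorem sq_recurrenceCoeff_le_four_mul (hQ : IsFreudExponent Q κ)
    (hP : IsOrthonormalFamily (freudWeight Q) P) (hα : 0 < α)
    (hn : (n + 1 : ℕ) ≤ α * deriv Q α) : recurrenceCoeff P n ^ 2 ≤ 4 * α ^ 2 := by
  have hg := hQ.isOddSuperlinear.div_id_pos hα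
  have hsq := (hQ.hasMoments.sq (P (n + 1))).const_mul (α ^ 2)
  have htail := (hQ.integrable_sq_mul_id_mul_deriv (P (n + 1))).div_const (deriv Q α / α)
  have hmul := hQ.hasMoments.sq (Polynomial.X * P (n + 1))
  simp only [Polynomial.eval_mul, Polynomial.eval_X] at hmul
  calc recurrenceCoeff P n ^ 2 ≤ ∫ t, (t * (P (n + 1)).eval t) ^ 2 * freudWeight Q t :=
        hP.sq_recurrenceCoeff_le hQ.hasMoments (freudWeight_nonneg Q) n
    _ ≤ ∫ t, (α ^ 2 * ((P (n + 1)).eval t ^ 2 * freudWeight Q t) +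
          (P (n + 1)).eval t ^ 2 * freudWeight Q t * (t * deriv Q t) / (deriv Q α / α)) :=
        integral_mono hmul (hsq.add htail) fun t => by
          have h := mul_le_mul_of_nonneg_left (hQ.isOddSuperlinear.sq_le hα t)
            (mul_nonneg (sq_nonneg ((P (n + 1)).eval t)) (freudWeight_nonneg Q t))
          simp only [mul_add, ← mul_div_assoc] at h ⊢
          linarith
    _ = α ^ 2 + (2 * (n + 1 : ℕ) + 1) / (deriv Q α / α) := by
        rw [integral_add hsq htail, integral_const_mul, integral_div, hP.integral_sq,
          hQ.integral_sq_mul_id_mul_deriv hP, mul_one]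
    _ ≤ α ^ 2 + 3 * α ^ 2 := by
        gcongr
        rw [div_le_iff₀ hg, mul_assoc, ← hQ.isOddSuperlinear.id_mul_eq]
        push_cast at hn ⊢
        linarith [n.cast_nonneg (α := ℝ)]
    _ = 4 * α ^ 2 := by ring

theorem div_sq_recurrenceCoeff_le_ladderIntegral_zero (hQ : IsFreudExponent Q κ)
    (hP : IsOrthonormalFamily (freudWeight Q) P) (n : ℕ) :
    (n + 1) / (2 * recurrenceCoeff P n ^ 2) ≤ ladderIntegral Q (P (n + 1)) 0 := by
  have hρ := hP.recurrenceCoeff_pos n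
  have hcross : ∫ t, (P (n + 1)).eval t * (P n).eval t * (deriv Q t * freudWeight Q t) =
      (n + 1) / recurrenceCoeff P n := by
    rw [← neg_eq_iff_eq_neg.2 (hP.integral_mul_succ_mul_deriv hQ.differentiable_freudWeight
      hQ.hasMoments hQ.hasMoments_deriv n), ← integral_neg]
    refine integral_congr_ae (ae_of_all _ fun t => ?_)
    simp only [hQ.deriv_freudWeight, mul_neg, neg_neg]
  have h := hQ.sq_integral_mul_mul_deriv_le (P (n + 1)) (P n)
  rw [hcross, hQ.integral_sq_mul_id_mul_deriv hP, div_pow, div_le_iff₀ (by positivity)] at h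
  rw [div_le_iff₀ (by positivity)]
  refine le_of_mul_le_mul_left ?_ n.cast_add_one_pos
  have hI := mul_nonneg (hQ.ladderIntegral_nonneg (P (n + 1)) 0) (sq_nonneg (recurrenceCoeff P n))
  nlinarith

theorem le_ladderIntegral (hQ : IsFreudExponent Q κ)
    (hP : IsOrthonormalFamily (freudWeight Q) P) (hn : 0 < n) (hα : 0 < α)
    (hnα : n ≤ α * deriv Q α) (x : ℝ) : 1 / 16 * (n / α ^ 2) ≤ ladderIntegral Q (P n) x := by
  obtain ⟨m, rfl⟩ := Nat.exists_eq_add_one_of_ne_zero hn.ne'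
  have hρ := hP.recurrenceCoeff_pos m
  have hx := hQ.isOddSuperlinear.div_id_nonneg x
  calc 1 / 16 * ((m + 1 : ℕ) / α ^ 2) = (m + 1) / (2 * (4 * α ^ 2)) / 2 := by
        push_cast
        field_simp
        norm_num
    _ ≤ (m + 1) / (2 * recurrenceCoeff P m ^ 2) / 2 := by
        gcongr
        exact hQ.sq_recurrenceCoeff_le_four_mul hP hα hnα
    _ ≤ ladderIntegral Q (P (m + 1)) 0 / 2 := by
        gcongr
        exact hQ.div_sq_recurrenceCoeff_le_ladderIntegral_zero hP m
    _ ≤ (deriv Q x / x * 1 + ladderIntegral Q (P (m + 1)) 0) / 2 := by linarith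
    _ ≤ ladderIntegral Q (P (m + 1)) x := by
        rw [← hP.integral_sq (m + 1)]
        exact hQ.half_add_le_ladderIntegral _ x

theorem half_deriv_abs_div_abs_le_ladderIntegral (hQ : IsFreudExponent Q κ)
    (hP : IsOrthonormalFamily (freudWeight Q) P) (n : ℕ) (x : ℝ) :
    1 / 2 * (deriv Q |x| / |x|) ≤ ladderIntegral Q (P n) x := by
  have h := hQ.half_add_le_ladderIntegral (P n) x
  rw [hP.integral_sq] at h
  rw [hQ.isOddSuperlinear.abs_div_abs]
  linarith [hQ.ladderIntegral_nonneg (P n) 0]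

theorem ladderIntegral_le_rpow_mul (hQ : IsFreudExponent Q κ)
    (hP : IsOrthonormalFamily (freudWeight Q) P) (hn : 0 < n) (hα : 0 < α)
    (hnα : n ≤ α * deriv Q α) (hs : 0 < s) (hK : 1 ≤ K) (hαs : α ≤ K * s)
    (hx : 2 * |x| ≤ K * s) :
    ladderIntegral Q (P n) x ≤ (κ + 6) * K ^ (κ - 1) * (deriv Q s / s) := by
  set R := K * s
  have hR : 0 < R := hα.trans_le hαs
  have hκ := hQ.isFreudDeriv.one_le
  have hn1 : (1 : ℝ) ≤ n := Nat.one_le_cast.2 hn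
  have hnR : 2 * n + 1 ≤ 3 * (R ^ 2 * (deriv Q R / R)) := by
    rw [← hQ.isOddSuperlinear.id_mul_eq]
    have := mul_le_mul hαs (hQ.isOddSuperlinear.monotoneOn hα hR hαs)
      (hQ.isOddSuperlinear.pos α hα).le hR.le
    linarith
  have h := hQ.ladderIntegral_le (P n) hR hx
  rw [hP.integral_sq, hQ.integral_sq_mul_id_mul_deriv hP, mul_one] at h
  calc ladderIntegral Q (P n) x
      ≤ κ * (deriv Q R / R) + 2 / R ^ 2 * (3 * (R ^ 2 * (deriv Q R / R))) := h.trans (by gcongr)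
    _ = (κ + 6) * (deriv Q R / R) := by
        generalize deriv Q R / R = g
        field_simp
        ring
    _ ≤ (κ + 6) * (K ^ (κ - 1) * (deriv Q s / s)) := by
        gcongr
        exact hQ.isFreudDeriv.div_id_le_rpow_mul hs hK (abs_of_pos hR).le
    _ = (κ + 6) * K ^ (κ - 1) * (deriv Q s / s) := (mul_assoc _ _ _).symm

theorem ladderIntegral_le_of_abs_le (hQ : IsFreudExponent Q κ)
    (hP : IsOrthonormalFamily (freudWeight Q) P) (hn : 0 < n) (hα : 0 < α)
    (hnα : n = mrsIntegral (deriv Q) α) (hx : |x| ≤ L * α) :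
    ladderIntegral Q (P n) x ≤
      (κ + 6) * max (2 * L) 1 ^ (κ - 1) * (π / 2 * (κ + 2)) * (n / α ^ 2) := by
  have hκ := hQ.isFreudDeriv.one_le
  have hα' : deriv Q α / α ≤ π / 2 * (κ + 2) * (n / α ^ 2) := by
    rw [← mul_div_assoc, le_div_iff₀' (by positivity), ← hQ.isOddSuperlinear.id_mul_eq, hnα]
    exact hQ.isFreudDeriv.mul_le_mrsIntegral hα
  have hLα := mul_le_mul_of_nonneg_right (le_max_left (2 * L) 1) hα.le
  have h := hQ.ladderIntegral_le_rpow_mul hP hn hα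
    (hnα.trans_le (hQ.isFreudDeriv.mrsIntegral_le hα)) hα (le_max_right (2 * L) 1)
    (le_mul_of_one_le_left hα.le (le_max_right _ _)) (x := x) (by linarith)
  rw [mul_assoc _ (π / 2 * (κ + 2))]
  exact h.trans (by gcongr)

theorem ladderIntegral_le_of_le_abs (hQ : IsFreudExponent Q κ)
    (hP : IsOrthonormalFamily (freudWeight Q) P) (hn : 0 < n) (hα : 0 < α)
    (hnα : n = mrsIntegral (deriv Q) α) (hL : 0 < L) (hx : L * α ≤ |x|) :
    ladderIntegral Q (P n) x ≤ (κ + 6) * max L⁻¹ 2 ^ (κ - 1) * (deriv Q |x| / |x|) := by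
  have hx0 : 0 < |x| := (mul_pos hL hα).trans_le hx
  refine hQ.ladderIntegral_le_rpow_mul hP hn hα
    (hnα.trans_le (hQ.isFreudDeriv.mrsIntegral_le hα)) hx0
    (one_le_two.trans (le_max_right _ _)) ?_ (mul_le_mul_of_nonneg_right (le_max_right _ _) hx0.le)
  calc α ≤ L⁻¹ * |x| := (le_inv_mul_iff₀ hL).2 hx
    _ ≤ max L⁻¹ 2 * |x| := mul_le_mul_of_nonneg_right (le_max_left _ _) hx0.le

end IsFreudExponent

theorem isFreudExponent_of_le_div {Q : ℝ → ℝ} {B : ℝ} (heven : Q.Even)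
    (hQ : ContDiff ℝ 2 Q) (hpos : ∀ x, 0 < x → 0 < deriv Q x)
    (hle : ∀ x, 0 < x → 2 ≤ deriv (fun y => y * deriv Q y) x / deriv Q x)
    (hge : ∀ x, 0 < x → deriv (fun y => y * deriv Q y) x / deriv Q x ≤ B) :
    IsFreudExponent Q (B - 1) := by
  have hQ' := hQ.differentiable_deriv_two
  have hd : ∀ x, deriv (fun y => y * deriv Q y) x = deriv Q x + x * deriv (deriv Q) x := fun x =>
    (((hasDerivAt_id x).fun_mul (hQ' x).hasDerivAt).congr_deriv (by rw [one_mul, id])).deriv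
  refine ⟨hQ.differentiable two_ne_zero, odd_deriv_of_even_s15 heven, hpos, hQ',
    fun x hx => ?_, fun x hx => ?_⟩
  · have h := hle x hx
    rw [hd, le_div_iff₀ (hpos x hx)] at h
    linarith
  · have h := hge x hx
    rw [hd, div_le_iff₀ (hpos x hx)] at h
    linarith

theorem An_asymptotics_general {Q : ℝ → ℝ} {κ : ℝ} {P : ℕ → ℝ[X]} {a : ℕ → ℝ} {L : ℝ}
    (hQ : IsFreudExponent Q κ) (hP : IsOrthonormalFamily (freudWeight Q) P)
    (ha : ∀ n, 0 < n → 0 < a n)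
    (hMRS : ∀ n : ℕ, 0 < n → n = mrsIntegral (deriv Q) (a n))
    (hL : 0 < L) :
    ∃ c₁ c₂ : ℝ, 0 < c₁ ∧ 0 < c₂ ∧ ∀ n : ℕ, 0 < n → ∀ x : ℝ,
      (|x| ≤ L * a n →
        c₁ * (n / a n ^ 2) ≤ ladderIntegral Q (P n) x ∧
          ladderIntegral Q (P n) x ≤ c₂ * (n / a n ^ 2)) ∧
      (L * a n ≤ |x| →
        c₁ * (deriv Q |x| / |x|) ≤ ladderIntegral Q (P n) x ∧
          ladderIntegral Q (P n) x ≤ c₂ * (deriv Q |x| / |x|)) := by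
  have hκ := hQ.isFreudDeriv.one_le
  refine ⟨1 / 16, max ((κ + 6) * max (2 * L) 1 ^ (κ - 1) * (π / 2 * (κ + 2)))
    ((κ + 6) * max L⁻¹ 2 ^ (κ - 1)), by norm_num, lt_max_of_lt_right (by positivity),
    fun n hn x => ?_⟩
  have han := ha n hn
  have hx0 : 0 ≤ deriv Q |x| / |x| := hQ.isOddSuperlinear.div_id_nonneg _
  refine ⟨fun hx => ⟨?_, ?_⟩, fun hx => ⟨?_, ?_⟩⟩
  · exact hQ.le_ladderIntegral hP hn han
      ((hMRS n hn).trans_le (hQ.isFreudDeriv.mrsIntegral_le han)) x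
  · refine (hQ.ladderIntegral_le_of_abs_le hP hn han (hMRS n hn) hx).trans ?_
    gcongr
    exact le_max_left _ _
  · exact (mul_le_mul_of_nonneg_right (by norm_num) hx0).trans
      (hQ.half_deriv_abs_div_abs_le_ladderIntegral hP n x)
  · refine (hQ.ladderIntegral_le_of_le_abs hP hn han (hMRS n hn) hL hx).trans ?_
    gcongr
    exact le_max_right _ _

/-- For a Freud weight `w = e^{-Q}` (with `2 ≤ A ≤ (xQ'(x))'/Q'(x) ≤ B`
and `|xQ'''(x)/Q''(x)| ≤ c` for `|x| ≥ 1`), with `p_n` the orthonormal polynomials,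
`A_n(x)/ρ_n = ∫ p_n(t)²·w(t)·(Q'(t)-Q'(x))/(t-x) dt`, `a_u` the Mhaskar–Rahmanov–Saff
numbers and `L₀` with `(L₀/2)·a_n > a_{2n+⌊A-1⌋+1}`, for every `L > L₀` there are constants
`c₁, c₂ > 0` (depending only on `L`) such that `A_n(x)/ρ_n ≍ n/a_n²` for `|x| ≤ L·a_n` and
`A_n(x)/ρ_n ≍ Q'(|x|)/|x|` for `|x| ≥ L·a_n`. -/
theorem An_asymptotics
    (Q : ℝ → ℝ) (hQeven : ∀ x, Q (-x) = Q x) (hQsmooth : ContDiff ℝ 3 Q)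
    (hQ'pos : ∀ x : ℝ, 0 < x → 0 < deriv Q x)
    (A B : ℝ) (hA : 2 ≤ A)
    (hAB : ∀ x : ℝ, 0 < x →
      A ≤ deriv (fun y => y * deriv Q y) x / deriv Q x ∧
      deriv (fun y => y * deriv Q y) x / deriv Q x ≤ B)
    (c : ℝ) (hc : ∀ x : ℝ, 1 ≤ |x| →
      |x * iteratedDeriv 3 Q x / iteratedDeriv 2 Q x| ≤ c)
    (P : ℕ → Polynomial ℝ)
    (hdeg : ∀ n, (P n).natDegree = n) (hlead : ∀ n, 0 < (P n).leadingCoeff)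
    (horth : ∀ n : ℕ, ∀ q : Polynomial ℝ, q.degree < n →
      ∫ t : ℝ, (P n).eval t * q.eval t * Real.exp (-(Q t)) = 0)
    (hnorm : ∀ n : ℕ, ∫ t : ℝ, ((P n).eval t) ^ 2 * Real.exp (-(Q t)) = 1)
    (An : ℕ → ℝ → ℝ)
    (hAn : ∀ n : ℕ, ∀ x : ℝ, An n x =
      ∫ t : ℝ, ((P n).eval t) ^ 2 * Real.exp (-(Q t)) * ((deriv Q t - deriv Q x) / (t - x)))
    (a : ℝ → ℝ)
    (hMRS : ∀ u : ℝ, 0 < u → 0 < a u ∧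
      u = (2 / Real.pi) *
        ∫ t in Set.Ioo (0 : ℝ) 1, (a u * t * deriv Q (a u * t)) / Real.sqrt (1 - t ^ 2))
    (L₀ : ℝ)
    (hL₀ : ∀ n : ℕ, 0 < n → a ((2 * n + ⌊A - 1⌋₊ + 1 : ℕ) : ℝ) < (L₀ / 2) * a n) :
    ∀ L : ℝ, L₀ < L → ∃ c₁ c₂ : ℝ, 0 < c₁ ∧ 0 < c₂ ∧
      ∀ n : ℕ, 0 < n → ∀ x : ℝ,
        (|x| ≤ L * a n →
          c₁ * ((n : ℝ) / (a n) ^ 2) ≤ An n x ∧ An n x ≤ c₂ * ((n : ℝ) / (a n) ^ 2)) ∧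
        (L * a n ≤ |x| →
          c₁ * (deriv Q |x| / |x|) ≤ An n x ∧ An n x ≤ c₂ * (deriv Q |x| / |x|)) := by
  have hQ : IsFreudExponent Q (B - 1) := isFreudExponent_of_le_div hQeven
    (hQsmooth.of_le (by norm_num)) hQ'pos (fun x hx => hA.trans (hAB x hx).1)
    fun x hx => (hAB x hx).2
  have ha : ∀ n : ℕ, 0 < n → 0 < a n := fun n hn => (hMRS n (Nat.cast_pos.2 hn)).1
  have hL₀_pos : 0 < L₀ / 2 :=
    pos_of_mul_pos_left ((ha _ (Nat.succ_pos _)).trans (hL₀ 1 one_pos)) (ha 1 one_pos).le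
  intro L hL
  simp only [hAn]
  exact An_asymptotics_general hQ ⟨hdeg, hlead, horth, hnorm⟩ ha
    (fun n hn => (hMRS n (Nat.cast_pos.2 hn)).2) (by linarith)
end
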